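/- Let E be an extraspecial group of order 7³ and exponent 7. Then E admits an automorphism α of order 2 that centralizes the center Z(E) and inverts every element of E/Z(E), and an automorphism β of order 3 such that ⟨β⟩ acts Frobeniusly on E, with α and β commuting. Moreover, for such α and β, the semidirect product G = E ⋊ ⟨αβ⟩ satisfies: the set of degrees of the irreducible complex characters of G is {1, 6, 21}, Z(E) is the unique minimal normal subgroup of G, G has Fitting height 2, and G has a Sylow tower. -/

import Mathlib

/-!
Choose noncommuting `x, y` in `E` and let `z` be their commutator. Every element of `E` is uniquely
`xᵃ yᵇ zᶜ` with exponents in `𝔽₇`, and multiplication is that of the Heisenberg group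
(`IsHeisBasis.coord_mul`). For `s` in `𝔽₇ˣ` the dilation `(a, b, c) ↦ (s a, s b, s² c)` is an
automorphism; the dilations of ratios `-1` and `2` serve as `α` and `β`.

Conversely, let `α` and `β` be as in the theorem. Modulo the centre, generators `x, y` can be chosen
to be inverted by `α`. A nontrivial element on which `β`, of order `3` and without fixed points, acts
as a power map is raised to the power `2` or `4` modulo `7`. For any `e`, the product `e · βe · β²e`
is `β`-fixed modulo the centre, hence central, from which `βe` commutes with `e`. Together with
`αβ = βα` this shows that `βx = xᵏ` and `βy = yˡ` with `k, l ∈ {2, 4}`. As `βz = z^{kl}` and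
`kl ≡ 1` is excluded, `k = l`. So `αβ` or its inverse is the dilation `δ` of ratio `3`, a generator of `𝔽₇ˣ`
(`IsFrobPair.exists_normal_form`).

The group `G = E ⋊ ⟨δ⟩` is thus generated by `x, y, z, g` subject to the relations in `HeisRel`. In an
irreducible representation, if `x, y` act trivially the degree is `1`; if only `z` acts trivially,
then the `g`-orbit of a simultaneous eigenvector of `x` and `y` is a basis with `6` elements; and if
`z` acts nontrivially, its eigenvalues are permuted by `g` in orbits of length `3`, each eigenspace
being a Heisenberg representation of dimension `7`, so that the degree is `21`. In the last case the
basis consists of the vectors `gⁱ yʲ w`, where `w` is fixed by `x` and is an eigenvector of `z` and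
of `g³`. Each case occurs, as the permutation representation on a quotient `G ⧸ N` detects the
elements outside `N`.

A normal subgroup of `G` meeting `E` nontrivially contains `Z(E)`; one meeting `E` trivially acts on
`E` by inner automorphisms, of order dividing both `7` and `6`, and is trivial. So `Z(E)` is the unique
minimal normal subgroup, and as it is not central, `G` is not nilpotent, while `G / E` is cyclic. The
series `1 < E < E ⋊ ⟨δ²⟩ < G` is a Sylow tower.
-/

/-- The set of degrees of the irreducible complex characters of `G`. -/
def charDegrees (G : Type) [Group G] : Set ℕ :=
  {d | ∃ V : FDRep ℂ G, CategoryTheory.Simple V ∧ Module.finrank ℂ V = d}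

/-- `G` is a *composite degree group* (CDG): `1` is the only prime power among the degrees of
the irreducible complex characters of `G`. -/
def IsCDG (G : Type) [Group G] : Prop :=
  ∀ d ∈ charDegrees G, IsPrimePow d → d = 1

/-- The quotient `B/A` (for normal subgroups `A ≤ B` of `G`) is a nilpotent group. -/
def IsNilpotentQuot {G : Type*} [Group G] (A B : Subgroup G) [A.Normal] : Prop :=
  Group.IsNilpotent (↥(B.map (QuotientGroup.mk' A)))

/-- `F` is a normal series `⊥ = F 0 ≤ F 1 ≤ ⋯ ≤ F n = ⊤` of normal subgroups of `G`
with every quotient `F (i+1) / F i` nilpotent. -/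
def IsFittingSeries {G : Type*} [Group G] (F : ℕ → Subgroup G) (n : ℕ) : Prop :=
  F 0 = ⊥ ∧ F n = ⊤ ∧ (∀ i, (F i).Normal) ∧ (∀ i, i < n → F i ≤ F (i + 1)) ∧
    ∀ i, i < n → ∀ hi : (F i).Normal, @IsNilpotentQuot G _ (F i) (F (i + 1)) hi

/-- The Fitting height of `G` equals `n`: `n` is the length of a shortest normal series of `G`
with nilpotent quotients. -/
def FittingHeightIs (G : Type*) [Group G] (n : ℕ) : Prop :=
  (∃ F : ℕ → Subgroup G, IsFittingSeries F n) ∧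
    ∀ m : ℕ, (∃ F : ℕ → Subgroup G, IsFittingSeries F m) → n ≤ m

/-- `N` is a minimal normal subgroup of `G`: it is nontrivial, normal, and contains no smaller
nontrivial normal subgroup of `G`. -/
def IsMinimalNormal {G : Type*} [Group G] (N : Subgroup G) : Prop :=
  N.Normal ∧ N ≠ ⊥ ∧ ∀ M : Subgroup G, M.Normal → M ≤ N → M = ⊥ ∨ M = N

/-- `N` is the unique minimal normal subgroup of `G`. -/
def IsUniqueMinimalNormal (G : Type*) [Group G] (N : Subgroup G) : Prop :=
  IsMinimalNormal N ∧ ∀ M : Subgroup G, IsMinimalNormal M → M = N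

/-- One step of a Sylow tower: the quotient `B/A` is isomorphic to a Sylow subgroup
of `G/A`. -/
def IsSylowQuotStep {G : Type*} [Group G] (A B : Subgroup G) [A.Normal] : Prop :=
  ∃ (p : ℕ) (_ : Fact p.Prime) (S : Sylow p (G ⧸ A)),
    Nonempty ((↥(B.map (QuotientGroup.mk' A))) ≃* ↥(S : Subgroup (G ⧸ A)))

/-- `G` has a Sylow tower: there is a normal series `⊥ = P 0 ≤ ⋯ ≤ P k = ⊤` of normal
subgroups of `G` in which each quotient `P (j+1) / P j` is isomorphic to a Sylow subgroup
of `G / P j`. -/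
def HasSylowTower (G : Type*) [Group G] : Prop :=
  ∃ (k : ℕ) (P : ℕ → Subgroup G),
    P 0 = ⊥ ∧ P k = ⊤ ∧ (∀ j, (P j).Normal) ∧ (∀ j, j < k → P j ≤ P (j + 1)) ∧
      ∀ j, j < k → ∀ hj : (P j).Normal, @IsSylowQuotStep G _ (P j) (P (j + 1)) hj

/-- An extraspecial `p`-group: a `p`-group whose center and commutator subgroup coincide
and have order `p`. -/
def IsExtraspecial (p : ℕ) (E : Type*) [Group E] : Prop :=
  IsPGroup p E ∧ Subgroup.center E = commutator E ∧ Nat.card (Subgroup.center E) = p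

/-! ### Irreducible representations and `FDRep` -/

open CategoryTheory in
/-- A categorically simple representation is irreducible in the elementwise sense: its only
invariant subspaces are `⊥` and `⊤`. -/
theorem simple_imp {G : Type} [Group G] (V : FDRep ℂ G) (hV : Simple V)
    (W : Submodule ℂ V) (hW : ∀ g, ∀ v ∈ W, V.ρ g v ∈ W) : W = ⊥ ∨ W = ⊤ := by
  let σ : Subrepresentation V.ρ := ⟨W, fun g v hv => hW g v hv⟩
  let Y : FDRep ℂ G := FDRep.of (V := W) σ.toRepresentation
  let i : Y ⟶ V := ⟨FGModuleCat.ofHom W.subtype, fun g => by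
    ext v; rfl⟩
  have : Mono i := by
    have : Mono ((Action.forget (FGModuleCat ℂ) G).map i) := by
      apply ConcreteCategory.mono_of_injective
      exact W.injective_subtype
    exact Functor.mono_of_mono_map (Action.forget (FGModuleCat ℂ) G) this
  by_cases h0 : i = 0
  · left
    rw [Submodule.eq_bot_iff]
    intro v hv
    have := congrArg (fun f : Y ⟶ V => f.hom.hom.hom (⟨v, hv⟩ : W)) h0
    exact this
  · right
    have := isIso_of_mono_of_nonzero h0
    rw [eq_top_iff]
    intro v _
    have h1 := congrArg (fun f : V ⟶ V => f.hom.hom.hom v) (IsIso.inv_hom_id i)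
    have h2 : v = ((inv i).hom.hom.hom v : W).1 := h1.symm
    rw [h2]
    exact Subtype.property _

open CategoryTheory in
theorem simple_nontrivial {G : Type} [Group G] (V : FDRep ℂ G) (hV : Simple V) : Nontrivial V := by
  by_contra h
  rw [not_nontrivial_iff_subsingleton] at h
  apply id_nonzero V
  ext v
  exact Subsingleton.elim (α := V) _ _

open CategoryTheory in
/-- Converse of `simple_imp`. -/
theorem imp_simple {G : Type} [Group G] {V : Type} [AddCommGroup V] [Module ℂ V]
    [FiniteDimensional ℂ V] [Nontrivial V] (ρ : Representation ℂ G V)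
    (h : ∀ W : Submodule ℂ V, (∀ g, ∀ v ∈ W, ρ g v ∈ W) → W = ⊥ ∨ W = ⊤) :
    Simple (FDRep.of ρ) := by
  constructor
  intro Y f hf
  have hcomm : ∀ g (v : Y), f.hom.hom.hom (Y.ρ g v) = ρ g (f.hom.hom.hom v) := by
    intro g v
    exact congrArg (fun k => k.hom.hom v) (f.comm g)
  constructor
  · intro hi h0
    have : 𝟙 (FDRep.of ρ) = 0 := 
      (IsIso.inv_hom_id f).symm.trans
        ((congrArg (fun k => inv f ≫ k) h0).trans Limits.comp_zero)
    obtain ⟨v, hv⟩ := exists_ne (0 : V)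
    exact hv (congrArg (fun k : FDRep.of ρ ⟶ FDRep.of ρ => k.hom.hom.hom v) this)
  · intro h0
    let F : Y →ₗ[ℂ] V := f.hom.hom.hom
    have hinj : LinearMap.ker F = ⊥ := by
      let σ : Subrepresentation Y.ρ := ⟨LinearMap.ker F, fun g v hv => by
        rw [LinearMap.mem_ker] at hv ⊢
        exact (hcomm g v).trans (by rw [show f.hom.hom.hom v = 0 from hv, map_zero])⟩
      let K : FDRep ℂ G := FDRep.of (V := LinearMap.ker F) σ.toRepresentation
      let i : K ⟶ Y := ⟨FGModuleCat.ofHom (LinearMap.ker F).subtype, fun g => by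
        ext v; rfl⟩
      have : i ≫ f = 0 ≫ f := by
        rw [Limits.zero_comp]
        ext v
        exact v.2
      rw [cancel_mono] at this
      rw [Submodule.eq_bot_iff]
      intro v hv
      exact congrArg (fun k : K ⟶ Y => k.hom.hom.hom (⟨v, hv⟩ : LinearMap.ker F)) this
    have hsurj : LinearMap.range F = ⊤ := by
      rcases h (LinearMap.range F) (by
        rintro g _ ⟨v, rfl⟩
        exact ⟨Y.ρ g v, hcomm g v⟩) with h1 | h1
      · exfalso
        apply h0
        ext v
        have : F v ∈ LinearMap.range F := ⟨v, rfl⟩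
        rw [h1] at this
        exact this
      · exact h1
    let e : Y ≃ₗ[ℂ] V := LinearEquiv.ofBijective F
      ⟨LinearMap.ker_eq_bot.1 hinj, LinearMap.range_eq_top.1 hsurj⟩
    have : IsIso f.hom := by
      have : f.hom = (LinearEquiv.toFGModuleCatIso e).hom := rfl
      rw [this]; infer_instance
    exact Action.isIso_of_hom_isIso f

/-- Complete reducibility: an element acting nontrivially on a finite-dimensional representation acts
nontrivially on some irreducible representation which is trivial wherever the given one is. -/
theorem exists_simple {G : Type} [Group G] [Finite G] {V : Type} [AddCommGroup V] [Module ℂ V]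
    [FiniteDimensional ℂ V] (ρ : Representation ℂ G V) (g : G) (hg : ρ g ≠ 1) :
    ∃ V' : FDRep ℂ G, CategoryTheory.Simple V' ∧ V'.ρ g ≠ 1 ∧ ∀ h, ρ h = 1 → V'.ρ h = 1 := by
  have hss : IsSemisimpleModule (MonoidAlgebra ℂ G) ρ.asModule := by
    rw [← Representation.isSemisimpleRepresentation_iff_isSemisimpleModule_asModule]
    infer_instance
  have htop := IsSemisimpleModule.sSup_simples_eq_top (MonoidAlgebra ℂ G) ρ.asModule
  obtain ⟨m, hm, v, hv, hgv⟩ : ∃ m : Submodule (MonoidAlgebra ℂ G) ρ.asModule,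
      IsSimpleModule (MonoidAlgebra ℂ G) m ∧ ∃ v : V, v ∈ Subrepresentation.ofSubmodule' m ∧
        ρ g v ≠ v := by
    by_contra! hcon
    apply hg
    ext v
    have hv : (ρ.asModuleEquiv.symm v) ∈ sSup {m : Submodule (MonoidAlgebra ℂ G) ρ.asModule |
        IsSimpleModule (MonoidAlgebra ℂ G) m} := by rw [htop]; trivial
    rw [sSup_eq_iSup'] at hv
    have := Submodule.iSup_induction _ (motive := fun v : ρ.asModule =>
      ρ g (ρ.asModuleEquiv v) = ρ.asModuleEquiv v) hv
      (fun m v hv => hcon m.1 m.2 _ hv) (by simp) (fun a b ha hb => by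
        simp only [map_add, ha, hb])
    simpa using this
  set σ := Subrepresentation.ofSubmodule' m with hσ
  have hat : IsAtom σ := by
    rw [isSimpleModule_iff_isAtom] at hm
    exact (OrderIso.isAtom_iff (Subrepresentation.subrepresentationSubmoduleOrderIso (ρ := ρ)).symm m).2 hm
  have : Nontrivial σ.toSubmodule := by
    refine ⟨⟨v, hv⟩, 0, fun h => hgv ?_⟩
    have : v = 0 := congrArg Subtype.val h
    simp [this]
  refine ⟨FDRep.of (V := σ.toSubmodule) σ.toRepresentation, imp_simple _ ?_, ?_, ?_⟩
  · intro W hW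
    let τ : Subrepresentation ρ := ⟨W.map σ.toSubmodule.subtype, by
      rintro g _ ⟨w, hw, rfl⟩
      exact ⟨_, hW g w hw, rfl⟩⟩
    have hle : τ ≤ σ := by
      rintro _ ⟨w, hw, rfl⟩
      exact w.2
    rcases hat.le_iff.1 hle with h | h
    · left
      have h2 : W.map σ.toSubmodule.subtype = ⊥ := congrArg Subrepresentation.toSubmodule h
      rw [Submodule.eq_bot_iff]
      intro w hw
      have : w.1 ∈ W.map σ.toSubmodule.subtype := ⟨w, hw, rfl⟩
      rw [h2] at this
      exact Subtype.ext this
    · right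
      have h2 : W.map σ.toSubmodule.subtype = σ.toSubmodule :=
        congrArg Subrepresentation.toSubmodule h
      rw [eq_top_iff]
      intro w _
      have : w.1 ∈ W.map σ.toSubmodule.subtype := by rw [h2]; exact w.2
      obtain ⟨w', hw', he⟩ := this
      rwa [← Subtype.ext he]
  · intro h
    exact hgv (congrArg Subtype.val (congrArg (fun k => k (⟨v, hv⟩ : σ.toSubmodule)) h))
  · intro h hh
    ext w
    exact congrArg (fun k => k w.1) hh

/-! ### Irreducible representations of the Heisenberg group extended by a cyclic group -/

/-- Nonzero simultaneous eigenvectors of two commuting operators with pairwise distinct pairs of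
eigenvalues are linearly independent. -/
theorem linearIndependent_of_weights {V ι : Type*} [AddCommGroup V] [Module ℂ V]
    (A B : Module.End ℂ V) (hAB : Commute A B) (v : ι → V) (a b : ι → ℂ) (hv : ∀ i, v i ≠ 0)
    (hA : ∀ i, A (v i) = a i • v i) (hB : ∀ i, B (v i) = b i • v i)
    (hinj : ∀ i j, a i = a j → b i = b j → i = j) : LinearIndependent ℂ v := by
  have hf : ∀ i j : Bool, Commute (bif i then A else B) (bif j then A else B) := by
    rintro (_ | _) (_ | _)
    exacts [Commute.refl _, hAB.symm, hAB, Commute.refl _]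
  have h := Module.End.independent_iInf_maxGenEigenspace_of_forall_mapsTo
    (fun i : Bool => bif i then A else B)
    (fun i j φ => Module.End.mapsTo_maxGenEigenspace_of_comm (hf j i) φ)
  have h2 := h.comp (f := fun (i : ι) (t : Bool) => bif t then a i else b i) (by
    intro i j hij
    exact hinj i j (congrFun hij true) (congrFun hij false))
  refine h2.linearIndependent _ (fun i => ?_) hv
  simp only [Function.comp_apply, Submodule.mem_iInf]
  rintro (_ | _)
  · exact Module.End.mem_maxGenEigenspace _ _ _ |>.2 ⟨1, by simp [hB]⟩
  · exact Module.End.mem_maxGenEigenspace _ _ _ |>.2 ⟨1, by simp [hA]⟩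

theorem exists_eigenvector_mem {V : Type*} [AddCommGroup V] [Module ℂ V] [FiniteDimensional ℂ V]
    (T : Module.End ℂ V) (W : Submodule ℂ V) (hW : ∀ w ∈ W, T w ∈ W) (h0 : W ≠ ⊥) :
    ∃ v ∈ W, v ≠ 0 ∧ ∃ a : ℂ, T v = a • v := by
  have : Nontrivial W := (Submodule.nontrivial_iff_ne_bot).2 h0
  obtain ⟨a, ha⟩ := Module.End.exists_eigenvalue (T.restrict hW)
  obtain ⟨v, hv⟩ := ha.exists_hasEigenvector
  refine ⟨v, v.2, fun h => hv.2 (Subtype.ext h), a, ?_⟩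
  exact congrArg Subtype.val hv.apply_eq_smul

theorem pow_exponent_injective {a : ℂ} (h7 : a ^ 7 = 1) (h1 : a ≠ 1) {m n : ℕ}
    (h : a ^ m = a ^ n) : m % 7 = n % 7 := by
  have hpr : IsPrimitiveRoot a 7 := by
    have : Fact (Nat.Prime 7) := ⟨by norm_num⟩
    rw [← orderOf_eq_prime h7 h1]
    exact IsPrimitiveRoot.orderOf a
  rw [pow_eq_pow_mod m h7, pow_eq_pow_mod n h7] at h
  exact hpr.pow_inj (Nat.mod_lt _ (by norm_num)) (Nat.mod_lt _ (by norm_num)) h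

/-- Elements `x, y, z, g` generating a group and satisfying the relations of the semidirect
product of the Heisenberg group over `𝔽₇` by a cyclic group of order `6`: here `z` is a central
commutator of `x` and `y`, and conjugation by `g` raises `x, y` to the third power, where `3` is a
primitive root modulo `7`. -/
structure HeisRel {G : Type*} [Group G] (x y z g : G) : Prop where
  x7 : x ^ 7 = 1
  y7 : y ^ 7 = 1
  z7 : z ^ 7 = 1
  g6 : g ^ 6 = 1
  yx : y * x = x * y * z
  zx : z * x = x * z
  zy : z * y = y * z
  gx : g * x = x ^ 3 * g
  gy : g * y = y ^ 3 * g
  gz : g * z = z ^ 2 * g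
  gen : Submonoid.closure {x, y, g} = ⊤

section pow
variable {M : Type*} [Monoid M]

theorem swap_of_conj {t g : M} (h7 : t ^ 7 = 1) (h : g * t = t ^ 3 * g) : t * g = g * t ^ 5 := by
  have : SemiconjBy g (t ^ 5) ((t ^ 3) ^ 5) := SemiconjBy.pow_right h 5
  rw [this.eq, ← pow_mul, show 3 * 5 = 7 * 2 + 1 from rfl, pow_succ, pow_mul, h7]
  simp

theorem swap_pow {t g : M} {k : ℕ} (h : t * g = g * t ^ k) (j : ℕ) :
    t * g ^ j = g ^ j * t ^ k ^ j := by
  induction j with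
  | zero => simp
  | succ j ih =>
    have h2 : t ^ k ^ j * g = g * (t ^ k) ^ k ^ j :=
      (SemiconjBy.pow_right (show SemiconjBy g (t ^ k) t from h.symm) _).eq.symm
    rw [pow_succ, ← mul_assoc, ih, mul_assoc, h2, ← pow_mul, mul_assoc, pow_succ, mul_comm k]

end pow

namespace HeisRel
variable {G : Type*} [Group G] {x y z g : G} (R : HeisRel x y z g)
include R

theorem xg : x * g = g * x ^ 5 := swap_of_conj R.x7 R.gx
theorem yg : y * g = g * y ^ 5 := swap_of_conj R.y7 R.gy
theorem zg : z * g = g * z ^ 4 := by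
  have : SemiconjBy g (z ^ 4) ((z ^ 2) ^ 4) := SemiconjBy.pow_right R.gz 4
  rw [this.eq, ← pow_mul, show 2 * 4 = 7 + 1 from rfl, pow_succ, R.z7, one_mul]
theorem xy : x * y = y * x * z ^ 6 := by
  rw [R.yx, mul_assoc, ← pow_succ', R.z7, mul_one]

variable {V : Type*} [AddCommGroup V] [Module ℂ V] {ρ : Representation ℂ G V}

theorem stable (W : Submodule ℂ V) (hx : ∀ w ∈ W, ρ x w ∈ W) (hy : ∀ w ∈ W, ρ y w ∈ W)
    (hg : ∀ w ∈ W, ρ g w ∈ W) (h : G) : ∀ w ∈ W, ρ h w ∈ W := by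
  have : h ∈ Submonoid.closure {x, y, g} := by rw [R.gen]; trivial
  induction this using Submonoid.closure_induction with
  | mem a ha =>
    rcases ha with rfl | rfl | rfl
    exacts [hx, hy, hg]
  | one => simp
  | mul a b _ _ ha hb =>
    intro w hw
    rw [map_mul]
    exact ha _ (hb w hw)

end HeisRel

section rep
variable {G : Type*} [Group G] {V : Type*} [AddCommGroup V] [Module ℂ V] {ρ : Representation ℂ G V}

theorem rep_pow_apply {t : G} {a : ℂ} {v : V} (h : ρ t v = a • v) (n : ℕ) :
    ρ (t ^ n) v = a ^ n • v := by
  induction n with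
  | zero => simp
  | succ n ih => rw [pow_succ, map_mul, Module.End.mul_apply, h, map_smul, ih, smul_smul, pow_succ']

theorem eigenvalue_pow_seven {t : G} (ht : t ^ 7 = 1) {a : ℂ} {v : V} (hv : v ≠ 0)
    (h : ρ t v = a • v) : a ^ 7 = 1 := by
  have h1 := rep_pow_apply h 7
  rw [ht, map_one, Module.End.one_apply] at h1
  have : (a ^ 7 - 1) • v = 0 := by rw [sub_smul, ← h1, one_smul, sub_self]
  rcases smul_eq_zero.1 this with h | h
  · exact sub_eq_zero.1 h
  · exact absurd h hv

theorem rep_ne_zero (h : G) {v : V} (hv : v ≠ 0) : ρ h v ≠ 0 := by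
  intro h0
  apply hv
  have : ρ h⁻¹ (ρ h v) = v := by
    rw [← Module.End.mul_apply, ← map_mul]; simp
  rw [← this, h0, map_zero]

theorem span_stable {ι : Type*} (T : Module.End ℂ V) (v : ι → V)
    (h : ∀ i, T (v i) ∈ Submodule.span ℂ (Set.range v)) :
    ∀ w ∈ Submodule.span ℂ (Set.range v), T w ∈ Submodule.span ℂ (Set.range v) := by
  intro w hw
  have : Submodule.span ℂ (Set.range v) ≤ (Submodule.span ℂ (Set.range v)).comap T := by
    rw [Submodule.span_le]
    rintro _ ⟨i, rfl⟩
    exact h i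
  exact this hw

/-- An irreducible representation containing an independent family whose span is invariant has
dimension the size of the family. -/
theorem finrank_of_family {ι : Type*} [Fintype ι] [Nonempty ι] (v : ι → V)
    (hli : LinearIndependent ℂ v)
    (h : Submodule.span ℂ (Set.range v) = ⊥ ∨ Submodule.span ℂ (Set.range v) = ⊤) :
    Module.finrank ℂ V = Fintype.card ι := by
  rcases h with h | h
  · exfalso
    obtain ⟨i⟩ := ‹Nonempty ι›
    have : v i ∈ Submodule.span ℂ (Set.range v) := Submodule.subset_span ⟨i, rfl⟩
    rw [h] at this
    exact hli.ne_zero i this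
  · rw [← finrank_span_eq_card hli, h, finrank_top]

/-- The orbit under `g` of a simultaneous eigenvector of `t` and `s` with a nontrivial
`t`-eigenvalue is a basis. -/
theorem finrank_six {t s g : G} (ht : t ^ 7 = 1) (hg6 : g ^ 6 = 1)
    (htg : t * g = g * t ^ 5) (hsg : s * g = g * s ^ 5)
    (hirr : ∀ W : Submodule ℂ V, (∀ w ∈ W, ρ t w ∈ W) → (∀ w ∈ W, ρ s w ∈ W) →
      (∀ w ∈ W, ρ g w ∈ W) → W = ⊥ ∨ W = ⊤)
    {v : V} (hv : v ≠ 0) {a b : ℂ} (ha : ρ t v = a • v) (ha1 : a ≠ 1) (hb : ρ s v = b • v) :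
    Module.finrank ℂ V = 6 := by
  let u : Fin 6 → V := fun i => ρ (g ^ (i : ℕ)) v
  have key : ∀ {r : G} {c : ℂ}, r * g = g * r ^ 5 → ρ r v = c • v → ∀ i,
      ρ r (u i) = c ^ 5 ^ (i : ℕ) • u i := by
    intro r c hr hc i
    change ρ r (ρ (g ^ (i : ℕ)) v) = c ^ 5 ^ (i : ℕ) • (ρ (g ^ (i : ℕ)) v)
    rw [← Module.End.mul_apply, ← map_mul, swap_pow hr, map_mul, Module.End.mul_apply,
      rep_pow_apply hc, map_smul]
  have hmem : ∀ n : ℕ, ρ (g ^ n) v ∈ Submodule.span ℂ (Set.range u) := by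
    intro n
    rw [pow_eq_pow_mod n hg6]
    exact Submodule.subset_span ⟨⟨n % 6, Nat.mod_lt _ (by norm_num)⟩, rfl⟩
  have hli : LinearIndependent ℂ u := by
    refine linearIndependent_of_weights (ρ t) (ρ t) (Commute.refl _) u _ _
      (fun i => rep_ne_zero _ hv) (key htg ha) (key htg ha) fun i j h h' => ?_
    have := pow_exponent_injective (eigenvalue_pow_seven ht hv ha) ha1 h
    clear h h'
    revert i j
    decide
  rw [finrank_of_family u hli, Fintype.card_fin]
  refine hirr _ (span_stable _ _ fun i => ?_) (span_stable _ _ fun i => ?_)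
    (span_stable _ _ fun i => ?_)
  · rw [key htg ha]
    exact Submodule.smul_mem _ _ (hmem i)
  · rw [key hsg hb]
    exact Submodule.smul_mem _ _ (hmem i)
  · change ρ g (ρ (g ^ (i : ℕ)) v) ∈ _
    rw [← Module.End.mul_apply, ← map_mul, ← pow_succ']
    exact hmem _

end rep
namespace HeisRel
variable {G : Type*} [Group G] {x y z g : G} (R : HeisRel x y z g)
include R
variable {V : Type*} [AddCommGroup V] [Module ℂ V] {ρ : Representation ℂ G V}
  [FiniteDimensional ℂ V] [Nontrivial V]
  (hirr : ∀ W : Submodule ℂ V, (∀ h, ∀ w ∈ W, ρ h w ∈ W) → W = ⊥ ∨ W = ⊤)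
include hirr

/-- Where `x` and `y` act trivially, the representation factors through the cyclic group `⟨g⟩`. -/
theorem finrank_one (hx : ρ x = 1) (hy : ρ y = 1) : Module.finrank ℂ V = 1 := by
  obtain ⟨v, -, hv, a, ha⟩ := exists_eigenvector_mem (ρ g) ⊤ (by simp) top_ne_bot
  rw [finrank_of_family (fun _ : Unit => v) (LinearIndependent.of_subsingleton () hv), Fintype.card_unit]
  refine hirr _ (R.stable _ (by simp [hx]) (by simp [hy]) (span_stable _ _ fun i => ?_))
  rw [ha]
  exact Submodule.smul_mem _ _ (Submodule.subset_span ⟨(), rfl⟩)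

/-- Where `z` acts trivially, `x` and `y` commute and have a simultaneous eigenvector; if `x` and `y`
are not both trivial, one of the two eigenvalues is nontrivial. -/
theorem finrank_six (hz : ρ z = 1) (hxy : ρ x ≠ 1 ∨ ρ y ≠ 1) : Module.finrank ℂ V = 6 := by
  have hcomm : ρ y * ρ x = ρ x * ρ y := by
    rw [← map_mul, R.yx, map_mul, hz, mul_one, map_mul]
  obtain ⟨v₀, -, hv₀, a, ha₀⟩ := exists_eigenvector_mem (ρ x) ⊤ (by simp) top_ne_bot
  obtain ⟨v, ha, hv, b, hb⟩ := exists_eigenvector_mem (ρ y) (Module.End.eigenspace (ρ x) a)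
    (fun w hw => by
      rw [Module.End.mem_eigenspace_iff] at hw ⊢
      rw [← Module.End.mul_apply, ← hcomm, Module.End.mul_apply, hw, map_smul])
    (fun h => hv₀ (by
      have : v₀ ∈ Module.End.eigenspace (ρ x) a := Module.End.mem_eigenspace_iff.2 ha₀
      rwa [h] at this))
  rw [Module.End.mem_eigenspace_iff] at ha
  by_cases ha1 : a = 1
  · by_cases hb1 : b = 1
    · subst ha1 hb1
      rw [one_smul] at ha hb
      -- the fixed points of `x` and `y` form a nonzero, hence full, subrepresentation
      let F : Submodule ℂ V := LinearMap.eqLocus (ρ x) 1 ⊓ LinearMap.eqLocus (ρ y) 1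
      have hF : ∀ w, w ∈ F ↔ ρ x w = w ∧ ρ y w = w := fun w => Iff.rfl
      have fixg : ∀ {r : G}, r * g = g * r ^ 5 → ∀ w, ρ r w = w → ρ r (ρ g w) = ρ g w := by
        intro r hr w hw
        have := rep_pow_apply (a := 1) (by rwa [one_smul]) 5 (v := w) (t := r) (ρ := ρ)
        rw [one_pow, one_smul] at this
        rw [← Module.End.mul_apply, ← map_mul, hr, map_mul, Module.End.mul_apply, this]
      exfalso
      rcases hirr F (R.stable F (fun w hw => by rwa [((hF w).1 hw).1])
        (fun w hw => by rwa [((hF w).1 hw).2])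
        (fun w hw => ⟨fixg R.xg w hw.1, fixg R.yg w hw.2⟩)) with h | h
      · have : v ∈ F := ⟨ha, hb⟩
        rw [h] at this
        exact hv this
      · rcases hxy with h1 | h1 <;> apply h1 <;> ext w
        · exact ((hF w).1 (h ▸ Submodule.mem_top)).1
        · exact ((hF w).1 (h ▸ Submodule.mem_top)).2
    · exact _root_.finrank_six R.y7 R.g6 R.yg R.xg
        (fun W h1 h2 h3 => hirr W (R.stable W h2 h1 h3)) hv hb hb1 ha
  · exact _root_.finrank_six R.x7 R.g6 R.xg R.yg
      (fun W h1 h2 h3 => hirr W (R.stable W h1 h2 h3)) hv ha ha1 hb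

/-- Where `z` acts nontrivially: an eigenspace of `z` contains a fixed vector `w` of `x` which is an
eigenvector of the involution `g ^ 3`. The vectors `gⁱ yʲ w` with `i < 3` and `j < 7` are eigenvectors
for distinct pairs of eigenvalues of `z` and `x`, and their span is invariant since `g ^ 3` maps
`yʲ w` to a multiple of `y⁻ʲ w`. -/
theorem finrank_twentyone (hz : ρ z ≠ 1) : Module.finrank ℂ V = 21 := by
  have app : ∀ (a b : G) (w : V), ρ a (ρ b w) = ρ (a * b) w := fun a b w => by
    rw [map_mul, Module.End.mul_apply]
  -- `z` has no nonzero fixed vectors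
  have hfix : ∀ w, ρ z w = w → w = 0 := by
    rcases hirr (LinearMap.eqLocus (ρ z) 1) (R.stable _
      (fun w hw => by
        change ρ z (ρ x w) = ρ x w
        rw [app, R.zx, ← app, show ρ z w = w from hw])
      (fun w hw => by
        change ρ z (ρ y w) = ρ y w
        rw [app, R.zy, ← app, show ρ z w = w from hw])
      (fun w hw => by
        change ρ z (ρ g w) = ρ g w
        have := rep_pow_apply (a := 1) (by rw [one_smul]; exact hw) 4 (v := w) (t := z) (ρ := ρ)
        rw [one_pow, one_smul] at this
        rw [app, R.zg, ← app, this])) with h | h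
    · intro w hw
      have : w ∈ LinearMap.eqLocus (ρ z) 1 := hw
      rwa [h] at this
    · exfalso
      apply hz
      ext w
      have : w ∈ LinearMap.eqLocus (ρ z) 1 := h ▸ Submodule.mem_top
      exact this
  obtain ⟨v₀, -, hv₀, l, hl₀⟩ := exists_eigenvector_mem (ρ z) ⊤ (by simp) top_ne_bot
  obtain ⟨v₁, hl₁, hv₁, a, ha₁⟩ := exists_eigenvector_mem (ρ x) (Module.End.eigenspace (ρ z) l)
    (fun w hw => by
      rw [Module.End.mem_eigenspace_iff] at hw ⊢
      rw [app, R.zx, ← app, hw, map_smul])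
    (fun h => hv₀ (by
      have : v₀ ∈ Module.End.eigenspace (ρ z) l := Module.End.mem_eigenspace_iff.2 hl₀
      rwa [h] at this))
  rw [Module.End.mem_eigenspace_iff] at hl₁
  have hl7 := eigenvalue_pow_seven R.z7 hv₁ hl₁
  have ha7 := eigenvalue_pow_seven R.x7 hv₁ ha₁
  have hl1 : l ≠ 1 := by
    rintro rfl
    exact hv₁ (hfix v₁ (by rw [hl₁, one_smul]))
  -- `y` permutes the eigenvectors of `x` in an eigenspace of `z`
  have shift : ∀ (c : ℂ) (w : V), ρ z w = l • w → ρ x w = c • w → ∀ n : ℕ,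
      ρ z (ρ (y ^ n) w) = l • ρ (y ^ n) w ∧
      ρ x (ρ (y ^ n) w) = (c * l ^ (6 * n)) • ρ (y ^ n) w := by
    intro c w hw hc n
    induction n with
    | zero => simp [hw, hc]
    | succ n ih =>
      rw [pow_succ', ← app]
      constructor
      · rw [app, R.zy, ← app, ih.1, map_smul]
      · rw [app, R.xy, ← app, rep_pow_apply ih.1, map_smul, ← app, ih.2, map_smul, smul_smul,
          mul_add, mul_one, pow_add]
        congr 1
        ring
  -- hence `x` has a nonzero fixed vector in the eigenspace
  obtain ⟨v₂, hv₂, hl₂, hx₂⟩ : ∃ w : V, w ≠ 0 ∧ ρ z w = l • w ∧ ρ x w = w := by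
    have : ∃ n : ℕ, a * l ^ (6 * n) = 1 := by
      have hpr : IsPrimitiveRoot l 7 := by
        have : Fact (Nat.Prime 7) := ⟨by norm_num⟩
        rw [← orderOf_eq_prime hl7 hl1]
        exact IsPrimitiveRoot.orderOf l
      obtain ⟨i, -, hi⟩ := hpr.eq_pow_of_pow_eq_one ha7
      refine ⟨i, ?_⟩
      rw [← hi, ← pow_add, show i + 6 * i = 7 * i by ring, pow_mul, hl7, one_pow]
    obtain ⟨n, hn⟩ := this
    obtain ⟨h1, h2⟩ := shift a v₁ hl₁ ha₁ n
    rw [hn, one_smul] at h2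
    exact ⟨_, rep_ne_zero _ hv₁, h1, h2⟩
  have hxg3 := swap_pow R.xg 3
  have hzg3 := swap_pow R.zg 3
  -- the involution `g ^ 3` preserves these vectors and so has an eigenvector among them
  obtain ⟨w, hw, hzw, hxw, ε, hε⟩ : ∃ w : V, w ≠ 0 ∧ ρ z w = l • w ∧ ρ x w = (1 : ℂ) • w ∧
      ∃ ε : ℂ, ρ (g ^ 3) w = ε • w := by
    obtain ⟨w, ⟨h1, h2⟩, h3, h4⟩ := exists_eigenvector_mem (ρ (g ^ 3))
      (Module.End.eigenspace (ρ z) l ⊓ Module.End.eigenspace (ρ x) 1)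
      (fun w hw => by
        rw [Submodule.mem_inf, Module.End.mem_eigenspace_iff, Module.End.mem_eigenspace_iff]
          at hw ⊢
        rw [app, hzg3, ← app, rep_pow_apply hw.1, app, hxg3, ← app, rep_pow_apply hw.2, map_smul,
          map_smul, one_pow, pow_eq_pow_mod _ hl7]
        simp)
      (fun h => hv₂ (by
        have : v₂ ∈ Module.End.eigenspace (ρ z) l ⊓ Module.End.eigenspace (ρ x) 1 :=
          ⟨Module.End.mem_eigenspace_iff.2 hl₂,
            Module.End.mem_eigenspace_iff.2 (by rw [hx₂, one_smul])⟩
        rwa [h] at this))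
    exact ⟨w, h3, Module.End.mem_eigenspace_iff.1 h1, Module.End.mem_eigenspace_iff.1 h2, h4⟩
  let u : Fin 3 × Fin 7 → V := fun p => ρ (g ^ (p.1 : ℕ)) (ρ (y ^ (p.2 : ℕ)) w)
  have hyg := fun n => swap_pow R.yg n
  have hmem : ∀ n m : ℕ, ρ (g ^ n) (ρ (y ^ m) w) ∈ Submodule.span ℂ (Set.range u) := by
    intro n m
    have base : ∀ (j : Fin 3) (m : ℕ),
        ρ (g ^ (j : ℕ)) (ρ (y ^ m) w) ∈ Submodule.span ℂ (Set.range u) := by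
      intro j m
      rw [pow_eq_pow_mod m R.y7]
      exact Submodule.subset_span ⟨(j, ⟨m % 7, Nat.mod_lt _ (by norm_num)⟩), rfl⟩
    have step : ∀ n m : ℕ, ρ (g ^ (n + 3)) (ρ (y ^ m) w) = ε • ρ (g ^ n) (ρ (y ^ (6 * m)) w) := by
      intro n m
      have h1 : g ^ 3 * y ^ m = y ^ (27 * m) * g ^ 3 := by
        have h2 : SemiconjBy g y (y ^ 3) := R.gy
        have h3 : SemiconjBy g (y ^ 3) (y ^ 9) := by
          simpa [← pow_mul] using h2.pow_right 3
        have h4 : SemiconjBy g (y ^ 9) (y ^ 27) := by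
          simpa [← pow_mul] using h2.pow_right 9
        have h5 : SemiconjBy (g ^ 3) y (y ^ 27) := by
          have := (h4.mul_left h3).mul_left h2
          simpa [pow_succ] using this
        rw [(h5.pow_right m).eq, ← pow_mul]
      rw [pow_add, ← app, app (g ^ 3), h1, ← app (y ^ _), hε, map_smul, map_smul,
        pow_eq_pow_mod (27 * m) R.y7, pow_eq_pow_mod (6 * m) R.y7]
      congr 5
      omega
    have hn : n % 6 < 6 := Nat.mod_lt _ (by norm_num)
    rw [pow_eq_pow_mod n R.g6]
    generalize n % 6 = k at hn
    by_cases hk : k < 3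
    · exact base ⟨k, hk⟩ m
    · obtain ⟨j, rfl⟩ : ∃ j, k = j + 3 := ⟨k - 3, by omega⟩
      rw [step]
      exact Submodule.smul_mem _ _ (base ⟨j, by omega⟩ _)
  have hZ : ∀ p, ρ z (u p) = l ^ 4 ^ (p.1 : ℕ) • u p := by
    intro p
    change ρ z (ρ _ _) = _ • ρ _ _
    rw [app, swap_pow R.zg, ← app, rep_pow_apply (shift 1 w hzw hxw p.2).1, map_smul]
  have hX : ∀ p, ρ x (u p) = l ^ (6 * (p.2 : ℕ) * 5 ^ (p.1 : ℕ)) • u p := by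
    intro p
    change ρ x (ρ _ _) = _ • ρ _ _
    rw [app, swap_pow R.xg, ← app, rep_pow_apply (shift 1 w hzw hxw p.2).2, map_smul, one_mul,
      ← pow_mul]
  have hli : LinearIndependent ℂ u := by
    refine linearIndependent_of_weights (ρ z) (ρ x) ?_ u _ _
      (fun i => rep_ne_zero _ (rep_ne_zero _ hw)) hZ hX fun i j h1 h2 => ?_
    · change ρ z * ρ x = ρ x * ρ z
      rw [← map_mul, R.zx, map_mul]
    · have h3 := pow_exponent_injective hl7 hl1 h1
      have h4 := pow_exponent_injective hl7 hl1 h2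
      clear h1 h2
      revert i j
      decide
  rw [finrank_of_family u hli]
  · rfl
  refine hirr _ (R.stable _ (span_stable _ _ fun p => ?_) (span_stable _ _ fun p => ?_)
    (span_stable _ _ fun p => ?_))
  · rw [hX]
    exact Submodule.smul_mem _ _ (hmem _ _)
  · change ρ y (ρ _ _) ∈ _
    rw [app, hyg, ← app, app (y ^ 5 ^ (p.1 : ℕ)), ← pow_add]
    exact hmem _ _
  · change ρ g (ρ _ _) ∈ _
    rw [app, ← pow_succ']
    exact hmem _ _

end HeisRel

/-! ### The set of character degrees -/

/-- An element outside a normal subgroup `N` is detected by an irreducible representation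
trivial on `N`, found inside the permutation representation on `G ⧸ N`. -/
theorem exists_simple_of_notMem {G : Type} [Group G] [Finite G] (N : Subgroup G) [N.Normal] (h : G)
    (hh : h ∉ N) : ∃ V : FDRep ℂ G, CategoryTheory.Simple V ∧ V.ρ h ≠ 1 ∧ ∀ n ∈ N, V.ρ n = 1 := by
  obtain ⟨V, hV, h1, h2⟩ := exists_simple (Representation.ofMulAction ℂ G (G ⧸ N)) h (by
    intro h0
    have := congrArg (fun k => k (MonoidAlgebra.single ((1 : G) : G ⧸ N) (1 : ℂ))) h0
    simp only [Representation.ofMulAction_single, Module.End.one_apply] at this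
    rw [MonoidAlgebra.single_left_inj one_ne_zero, MulAction.Quotient.smul_mk, QuotientGroup.eq] at this
    apply hh
    simpa using this)
  refine ⟨V, hV, h1, fun n hn => h2 n ?_⟩
  ext q
  induction q using QuotientGroup.induction_on with
  | H q =>
    have : n • ((q : G) : G ⧸ N) = q := by
      rw [MulAction.Quotient.smul_mk, QuotientGroup.eq, smul_eq_mul, mul_inv_rev]
      simpa using ‹N.Normal›.conj_mem n⁻¹ (N.inv_mem hn) q⁻¹
    simp [this]

/-- The degree is determined by whether `z`, then `x` and `y`, act trivially. All three cases occur;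
for the second, `N` is a normal subgroup separating `x` from `z`. -/
theorem HeisRel.charDegrees_eq {G : Type} [Group G] [Finite G] {x y z g : G} (R : HeisRel x y z g)
    (N : Subgroup G) [N.Normal] (hz1 : z ≠ 1) (hzN : z ∈ N) (hxN : x ∉ N) :
    charDegrees G = {1, 6, 21} := by
  ext d
  simp only [charDegrees, Set.mem_ofPred_eq, Set.mem_insert_iff, Set.mem_singleton_iff]
  constructor
  · rintro ⟨V, hV, rfl⟩
    have := simple_nontrivial V hV
    have hirr := fun W h => simple_imp V hV W h
    by_cases hz : V.ρ z = 1
    · by_cases hxy : V.ρ x ≠ 1 ∨ V.ρ y ≠ 1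
      · exact Or.inr (Or.inl (R.finrank_six hirr hz hxy))
      · push Not at hxy
        exact Or.inl (R.finrank_one hirr hxy.1 hxy.2)
    · exact Or.inr (Or.inr (R.finrank_twentyone hirr hz))
  · rintro (rfl | rfl | rfl)
    · exact ⟨FDRep.of (1 : Representation ℂ G ℂ), imp_simple _ fun W _ => eq_bot_or_eq_top W,
        Module.finrank_self ℂ⟩
    · obtain ⟨V, hV, h1, h2⟩ := exists_simple_of_notMem N x hxN
      have := simple_nontrivial V hV
      exact ⟨V, hV, R.finrank_six (fun W h => simple_imp V hV W h) (h2 z hzN) (Or.inl h1)⟩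
    · obtain ⟨V, hV, h1, h2⟩ := exists_simple_of_notMem (⊥ : Subgroup G) z hz1
      have := simple_nontrivial V hV
      exact ⟨V, hV, R.finrank_twentyone (fun W h => simple_imp V hV W h) h1⟩

/-! ### Heisenberg coordinates on `E` -/

/-- `x, y` generate the group `E` of order `7³` and exponent `7`, in which every commutator is
central, and `z`, the commutator of `x` and `y`, generates the centre. -/
structure IsHeisBasis {E : Type*} [Group E] (x y z : E) : Prop where
  pow7 : ∀ e : E, e ^ 7 = 1
  yx : y * x = x * y * z
  hz : z ∈ Subgroup.center E
  z1 : z ≠ 1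
  card : Nat.card E = 7 ^ 3
  zgen : ∀ c ∈ Subgroup.center E, ∃ n : ℕ, c = z ^ n
  cent : ∀ a b : E, ∃ c ∈ Subgroup.center E, b * a = a * b * c

section heis
variable {E : Type*} [Group E]

open scoped commutatorElement in
theorem exists_commutator_eq (h : Subgroup.center E = commutator E) (a b : E) :
    ∃ c ∈ Subgroup.center E, b * a = a * b * c := by
  refine ⟨(a * b)⁻¹ * (b * a), ?_, by group⟩
  have : (a * b)⁻¹ * (b * a) = ⁅b⁻¹, a⁻¹⁆ := by
    rw [commutatorElement_def]; group
  rw [h, this]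
  exact Subgroup.commutator_mem_commutator (Subgroup.mem_top _) (Subgroup.mem_top _)

theorem exists_pow_of_mem_center (hc : Nat.card (Subgroup.center E) = 7) {z : E}
    (hz : z ∈ Subgroup.center E) (z1 : z ≠ 1) {c : E} (h : c ∈ Subgroup.center E) :
    ∃ n : ℕ, c = z ^ n := by
  have : Fact (Nat.Prime 7) := ⟨by norm_num⟩
  have : Finite (Subgroup.center E) := Nat.finite_of_card_ne_zero (by rw [hc]; norm_num)
  have h1 : (⟨c, h⟩ : Subgroup.center E) ∈ Submonoid.powers (⟨z, hz⟩ : Subgroup.center E) :=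
    mem_powers_of_prime_card hc (fun h => z1 (congrArg Subtype.val h))
  obtain ⟨n, hn⟩ := h1
  exact ⟨n, (congrArg Subtype.val hn).symm⟩

/-- Any two noncommuting elements of an extraspecial group of order `7³` and exponent `7` are part of
a system of Heisenberg coordinates. -/
theorem isHeisBasis_of_ne (hE : IsExtraspecial 7 E) (hcard : Nat.card E = 7 ^ 3)
    (hexp : Monoid.exponent E = 7) {x y : E} (h : x * y ≠ y * x) :
    ∃ z, IsHeisBasis x y z := by
  obtain ⟨-, h1, h2⟩ := hE
  obtain ⟨z, hz, hyx⟩ := exists_commutator_eq h1 x y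
  have z1 : z ≠ 1 := by
    rintro rfl
    rw [mul_one] at hyx
    exact h hyx.symm
  exact ⟨z, fun e => hexp ▸ Monoid.pow_exponent_eq_one e, hyx, hz, z1, hcard,
    fun c hc => exists_pow_of_mem_center h2 hz z1 hc, exists_commutator_eq h1⟩

theorem exists_noncomm (hE : IsExtraspecial 7 E) (hcard : Nat.card E = 7 ^ 3) :
    ∃ x y : E, x * y ≠ y * x := by
  by_contra! h
  have : Subgroup.center E = ⊤ := by
    rw [eq_top_iff]
    intro e _
    rw [Subgroup.mem_center_iff]
    exact fun g => h g e
  have h2 := hE.2.2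
  rw [this, Subgroup.card_top, hcard] at h2
  norm_num at h2

theorem pow_val_add {x : E} (h : x ^ 7 = 1) (a b : ZMod 7) :
    x ^ (a + b).val = x ^ a.val * x ^ b.val := by
  rw [ZMod.val_add, ← pow_eq_pow_mod _ h, pow_add]

theorem pow_val_mul {x : E} (h : x ^ 7 = 1) (a b : ZMod 7) :
    x ^ (a * b).val = x ^ (a.val * b.val) := by
  rw [ZMod.val_mul, ← pow_eq_pow_mod _ h]

theorem pow_inj_seven {z : E} (h : z ^ 7 = 1) (z1 : z ≠ 1) {m n : ℕ} (hmn : z ^ m = z ^ n) :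
    m % 7 = n % 7 := by
  have : Fact (Nat.Prime 7) := ⟨by norm_num⟩
  rwa [pow_eq_pow_iff_modEq, orderOf_eq_prime h z1] at hmn

theorem pow_val_inj {z : E} (h : z ^ 7 = 1) (z1 : z ≠ 1) {a b : ZMod 7}
    (hab : z ^ a.val = z ^ b.val) : a = b := by
  have := pow_inj_seven h z1 hab
  rw [Nat.mod_eq_of_lt (ZMod.val_lt a), Nat.mod_eq_of_lt (ZMod.val_lt b)] at this
  exact ZMod.val_injective 7 this

namespace IsHeisBasis
variable {x y z : E} (B : IsHeisBasis x y z)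
include B

theorem comm_z (e : E) : e * z = z * e := Subgroup.mem_center_iff.1 B.hz e

theorem comm_zpow (e : E) (n : ℕ) : e * z ^ n = z ^ n * e :=
  Subgroup.mem_center_iff.1 (pow_mem B.hz n) e

theorem ypow_xpow (n m : ℕ) : y ^ n * x ^ m = x ^ m * y ^ n * z ^ (n * m) := by
  have h1 : ∀ m : ℕ, y * x ^ m = x ^ m * y * z ^ m := by
    intro m
    induction m with
    | zero => simp
    | succ m ih =>
      calc y * x ^ (m + 1) = (y * x ^ m) * x := by rw [pow_succ, mul_assoc]
        _ = x ^ m * y * (z ^ m * x) := by rw [ih, mul_assoc]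
        _ = x ^ m * (y * x) * z ^ m := by rw [← B.comm_zpow]; simp only [mul_assoc]
        _ = x ^ m * x * y * (z * z ^ m) := by rw [B.yx]; simp only [mul_assoc]
        _ = _ := by rw [← pow_succ, ← pow_succ']
  induction n with
  | zero => simp
  | succ n ih =>
    calc y ^ (n + 1) * x ^ m = y * (y ^ n * x ^ m) := by rw [pow_succ', mul_assoc]
      _ = y * x ^ m * y ^ n * z ^ (n * m) := by rw [ih]; simp only [mul_assoc]
      _ = x ^ m * y * (z ^ m * y ^ n) * z ^ (n * m) := by rw [h1]; simp only [mul_assoc]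
      _ = x ^ m * (y * y ^ n) * (z ^ m * z ^ (n * m)) := by
        rw [← B.comm_zpow]; simp only [mul_assoc]
      _ = _ := by rw [← pow_succ', ← pow_add]; congr 2; ring

omit B in
/-- The coordinate map `(a, b, c) ↦ xᵃ yᵇ zᶜ`. -/
def coord (x y z : E) (p : ZMod 7 × ZMod 7 × ZMod 7) : E :=
  x ^ p.1.val * y ^ p.2.1.val * z ^ p.2.2.val

/-- In coordinates, multiplication is that of upper unitriangular matrices. -/
theorem coord_mul (p q : ZMod 7 × ZMod 7 × ZMod 7) :
    coord x y z p * coord x y z q =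
      coord x y z (p.1 + q.1, p.2.1 + q.2.1, p.2.2 + q.2.2 + p.2.1 * q.1) := by
  obtain ⟨a, b, c⟩ := p
  obtain ⟨a', b', c'⟩ := q
  simp only [coord, pow_val_add (B.pow7 _), pow_val_mul (B.pow7 _)]
  generalize a.val = a, b.val = b, c.val = c, a'.val = a', b'.val = b', c'.val = c'
  calc x ^ a * y ^ b * z ^ c * (x ^ a' * y ^ b' * z ^ c')
      = x ^ a * y ^ b * (z ^ c * (x ^ a' * y ^ b')) * z ^ c' := by simp only [mul_assoc]
    _ = x ^ a * (y ^ b * x ^ a') * y ^ b' * z ^ c * z ^ c' := by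
      rw [← B.comm_zpow]; simp only [mul_assoc]
    _ = x ^ a * x ^ a' * y ^ b * (z ^ (b * a') * y ^ b') * z ^ c * z ^ c' := by
      rw [B.ypow_xpow]; simp only [mul_assoc]
    _ = x ^ a * x ^ a' * (y ^ b * y ^ b') * (z ^ (b * a') * (z ^ c * z ^ c')) := by
      rw [← B.comm_zpow]; simp only [mul_assoc]
    _ = _ := by rw [← pow_add z c c', ← pow_add z (b * a'), add_comm (b * a'), pow_add z (c + c'),
      pow_add z c c']

theorem coord_comm_x (p : ZMod 7 × ZMod 7 × ZMod 7) :
    coord x y z p * x = x * coord x y z p * z ^ p.2.1.val := by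
  obtain ⟨a, b, c⟩ := p
  simp only [coord]
  generalize a.val = a, b.val = b, c.val = c
  have := B.ypow_xpow b 1
  rw [pow_one, mul_one] at this
  calc x ^ a * y ^ b * z ^ c * x = x ^ a * (y ^ b * x) * z ^ c := by
        rw [mul_assoc, ← B.comm_zpow]; simp only [mul_assoc]
    _ = x ^ a * x * y ^ b * (z ^ b * z ^ c) := by rw [this]; simp only [mul_assoc]
    _ = x * x ^ a * y ^ b * (z ^ c * z ^ b) := by rw [← pow_succ, ← pow_succ', ← pow_add,
          ← pow_add, add_comm b]
    _ = _ := by simp only [mul_assoc]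

theorem coord_comm_y (p : ZMod 7 × ZMod 7 × ZMod 7) :
    y * coord x y z p = coord x y z p * y * z ^ p.1.val := by
  obtain ⟨a, b, c⟩ := p
  simp only [coord]
  generalize a.val = a, b.val = b, c.val = c
  have := B.ypow_xpow 1 a
  rw [pow_one, one_mul] at this
  calc y * (x ^ a * y ^ b * z ^ c) = (y * x ^ a) * y ^ b * z ^ c := by simp only [mul_assoc]
    _ = x ^ a * y * (z ^ a * (y ^ b * z ^ c)) := by rw [this]; simp only [mul_assoc]
    _ = x ^ a * (y * y ^ b) * z ^ c * z ^ a := by rw [← B.comm_zpow]; simp only [mul_assoc]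
    _ = x ^ a * y ^ b * (y * z ^ c) * z ^ a := by rw [← pow_succ', pow_succ]; simp only [mul_assoc]
    _ = _ := by rw [B.comm_zpow y c]; simp only [mul_assoc]

theorem coord_injective : Function.Injective (coord x y z) := by
  intro p q h
  have hb : p.2.1 = q.2.1 := by
    apply pow_val_inj (B.pow7 z) B.z1
    have h1 := B.coord_comm_x p
    rw [h, B.coord_comm_x q] at h1
    exact (mul_left_cancel h1).symm
  have ha : p.1 = q.1 := by
    apply pow_val_inj (B.pow7 z) B.z1
    have h1 := B.coord_comm_y p
    rw [h, B.coord_comm_y q] at h1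
    exact (mul_left_cancel h1).symm
  have hc : p.2.2 = q.2.2 := by
    apply pow_val_inj (B.pow7 z) B.z1
    simp only [coord, ha, hb] at h
    exact mul_left_cancel h
  exact Prod.ext ha (Prod.ext hb hc)

theorem coord_bijective : Function.Bijective (coord x y z) := by
  have : Finite E := Nat.finite_of_card_ne_zero (by rw [B.card]; norm_num)
  refine (Nat.bijective_iff_injective_and_card _).2 ⟨B.coord_injective, ?_⟩
  rw [B.card]
  simp

/-- The coordinates form a bijection. -/
noncomputable def equiv : (ZMod 7 × ZMod 7 × ZMod 7) ≃ E := Equiv.ofBijective _ B.coord_bijective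

theorem equiv_apply (p : ZMod 7 × ZMod 7 × ZMod 7) : B.equiv p = coord x y z p := rfl

omit B in
theorem coord_center (c : ZMod 7) : coord x y z (0, 0, c) = z ^ c.val := by simp [coord]

/-- The dilation `(a, b, c) ↦ (s a, s b, s² c)`, an automorphism of `E`. -/
noncomputable def dil (s : (ZMod 7)ˣ) : E ≃* E where
  toEquiv := B.equiv.symm.trans
    (((Units.mulLeft s).prodCongr ((Units.mulLeft s).prodCongr (Units.mulLeft (s ^ 2)))).trans
      B.equiv)
  map_mul' e f := by
    obtain ⟨p, rfl⟩ := B.equiv.surjective e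
    obtain ⟨q, rfl⟩ := B.equiv.surjective f
    have h1 : B.equiv p * B.equiv q =
        B.equiv (p.1 + q.1, p.2.1 + q.2.1, p.2.2 + q.2.2 + p.2.1 * q.1) := B.coord_mul p q
    simp only [Equiv.toFun_as_coe, Equiv.trans_apply, h1, Equiv.symm_apply_apply]
    rw [equiv_apply, equiv_apply, equiv_apply, B.coord_mul]
    congr 1
    simp only [Equiv.prodCongr_apply, Prod.map, Units.mulLeft_apply, Units.val_pow_eq_pow_val]
    ext <;> simp <;> ring

theorem dil_coord (s : (ZMod 7)ˣ) (p : ZMod 7 × ZMod 7 × ZMod 7) :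
    B.dil s (coord x y z p) = coord x y z (s * p.1, s * p.2.1, s ^ 2 * p.2.2) := by
  change B.equiv _ = _
  rw [← equiv_apply B, Equiv.symm_apply_apply]
  rfl

/-- Dilations as an action of `𝔽₇ˣ`. -/
noncomputable def dilHom : (ZMod 7)ˣ →* MulAut E where
  toFun := B.dil
  map_one' := by
    ext e
    obtain ⟨p, rfl⟩ := B.coord_bijective.2 e
    rw [dil_coord]
    simp
  map_mul' s t := by
    ext e
    obtain ⟨p, rfl⟩ := B.coord_bijective.2 e
    rw [MulAut.mul_apply, dil_coord, dil_coord, dil_coord]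
    congr 1
    ext <;> simp <;> ring

theorem dilHom_coord (s : (ZMod 7)ˣ) (p : ZMod 7 × ZMod 7 × ZMod 7) :
    B.dilHom s (coord x y z p) = coord x y z (s * p.1, s * p.2.1, s ^ 2 * p.2.2) :=
  B.dil_coord s p

theorem dilHom_injective : Function.Injective B.dilHom := by
  intro s t h
  have h1 := congrArg (fun f => f (coord x y z (1, 0, 0))) h
  simp only [dilHom_coord] at h1
  have := congrArg Prod.fst (B.coord_injective h1)
  ext
  simpa using this

/-- The dilations of ratios `-1` and `2` are the required automorphisms. -/
theorem exists_automorphisms : ∃ α β : MulAut E,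
      orderOf α = 2 ∧ (∀ e ∈ Subgroup.center E, α e = e) ∧
      (∀ e : E, α e * e ∈ Subgroup.center E) ∧
      orderOf β = 3 ∧
      (∀ i : ℤ, β ^ i ≠ 1 → ∀ e : E, (β ^ i) e = e → e = 1) ∧
      α * β = β * α := by
  let u : (ZMod 7)ˣ := ⟨2, 4, by decide, by decide⟩
  refine ⟨B.dilHom (-1), B.dilHom u, ?_, ?_, ?_, ?_, ?_, ?_⟩
  · rw [orderOf_injective _ B.dilHom_injective]
    exact orderOf_eq_prime (by decide) (by decide)
  · intro e he
    obtain ⟨n, rfl⟩ := B.zgen e he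
    rw [pow_eq_pow_mod n (B.pow7 z), ← ZMod.val_natCast, ← coord_center, dilHom_coord]
    simp
  · intro e
    obtain ⟨p, rfl⟩ := B.coord_bijective.2 e
    rw [dilHom_coord, B.coord_mul]
    simp only [Units.val_neg, Units.val_one, neg_mul, one_mul, neg_add_cancel]
    rw [coord_center]
    exact pow_mem B.hz _
  · rw [orderOf_injective _ B.dilHom_injective]
    have : Fact (Nat.Prime 3) := ⟨by norm_num⟩
    exact orderOf_eq_prime (by decide) (by decide)
  · intro i hi e he
    have hu3 : (u ^ i) ^ 3 = 1 := by
      rw [← zpow_natCast, ← zpow_mul, mul_comm, zpow_mul, zpow_natCast,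
        show u ^ 3 = 1 by decide, one_zpow]
    have hu1 : u ^ i ≠ 1 := fun h => hi (by rw [← map_zpow, h, map_one])
    rw [← map_zpow] at he
    generalize u ^ i = w at *
    have w3 : (w : ZMod 7) ^ 3 = 1 := by rw [← Units.val_pow_eq_pow_val, hu3, Units.val_one]
    have w1 : (w : ZMod 7) ≠ 1 := fun h => hu1 (Units.ext h)
    obtain ⟨⟨a, b, c⟩, rfl⟩ := B.coord_bijective.2 e
    rw [dilHom_coord] at he
    have h := B.coord_injective he
    simp only [Prod.mk.injEq] at h
    obtain ⟨ha, hb, hc⟩ := h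
    have key : ∀ w a : ZMod 7, w ^ 3 = 1 → w ≠ 1 → (w * a = a → a = 0) ∧ (w ^ 2 * a = a → a = 0) := by
      decide
    rw [(key _ a w3 w1).1 ha, (key _ b w3 w1).1 hb, (key _ c w3 w1).2 hc]
    simp [coord]
  · rw [← map_mul, mul_comm, map_mul]

/-- The centralizer of `x` is generated by `x` and the centre. -/
theorem eq_of_commute {e : E} (h : e * x = x * e) : ∃ m n : ℕ, e = x ^ m * z ^ n := by
  obtain ⟨p, rfl⟩ := B.coord_bijective.2 e
  have h1 := B.coord_comm_x p
  rw [h] at h1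
  have h2 : z ^ p.2.1.val = z ^ (0 : ZMod 7).val := by
    rw [ZMod.val_zero, pow_zero]
    exact (mul_eq_left.1 h1.symm)
  have h3 := pow_val_inj (B.pow7 z) B.z1 h2
  exact ⟨p.1.val, p.2.2.val, by simp [coord, h3]⟩

end IsHeisBasis
end heis

/-! ### Normal form of the pair of automorphisms -/

/-- The conditions on `α` and `β`, in elementwise form. -/
structure IsFrobPair {E : Type*} [Group E] (α β : MulAut E) : Prop where
  invol : ∀ e, α (α e) = e
  center : ∀ e ∈ Subgroup.center E, α e = e
  inv : ∀ e, α e * e ∈ Subgroup.center E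
  cube : ∀ e, β (β (β e)) = e
  fix : ∀ e, β e = e → e = 1
  comm : ∀ e, α (β e) = β (α e)

theorem isFrobPair_of {E : Type*} [Group E] {α β : MulAut E} (h2 : orderOf α = 2)
    (hc : ∀ e ∈ Subgroup.center E, α e = e) (hi : ∀ e : E, α e * e ∈ Subgroup.center E)
    (h3 : orderOf β = 3) (hf : ∀ i : ℤ, β ^ i ≠ 1 → ∀ e : E, (β ^ i) e = e → e = 1)
    (hcomm : α * β = β * α) : IsFrobPair α β where
  invol e := by
    have := pow_orderOf_eq_one α
    rw [h2, pow_two] at this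
    rw [← MulAut.mul_apply, this, MulAut.one_apply]
  center := hc
  inv := hi
  cube e := by
    have := pow_orderOf_eq_one β
    rw [h3, pow_succ, pow_two] at this
    rw [← MulAut.mul_apply, ← MulAut.mul_apply, this, MulAut.one_apply]
  fix e he := by
    refine hf 1 ?_ e (by rwa [zpow_one])
    rw [zpow_one]
    rintro rfl
    simp at h3
  comm e := by rw [← MulAut.mul_apply, hcomm, MulAut.mul_apply]

namespace IsFrobPair
variable {E : Type*} [Group E] {α β : MulAut E} (P : IsFrobPair α β) {x y z : E}
include P

/-- On an invariant subgroup of order `7`, `β` raises to the power `2` or `4`, the two elements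
of order `3` in `𝔽₇ˣ`. -/
theorem exponent {e : E} (h7 : e ^ 7 = 1) (h1 : e ≠ 1) {k : ℕ} (hk : β e = e ^ k) :
    k % 7 = 2 ∨ k % 7 = 4 := by
  have h3 : (k ^ 3) % 7 = 1 % 7 := by
    apply pow_inj_seven h7 h1
    have := P.cube e
    rw [hk, map_pow, map_pow, hk, map_pow, hk] at this
    rw [pow_one]
    nth_rw 2 [← this]
    rw [← pow_mul, ← pow_mul]
    congr 1
    ring
  have h4 : k % 7 ≠ 1 := by
    intro h
    apply h1
    apply P.fix
    rw [hk, pow_eq_pow_mod k h7, h, pow_one]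
  rw [Nat.pow_mod] at h3
  have : k % 7 < 7 := Nat.mod_lt _ (by norm_num)
  generalize k % 7 = r at *
  interval_cases r <;> simp_all

omit P in
theorem center_mem (e : E) (he : e ∈ Subgroup.center E) : β e ∈ Subgroup.center E :=
  (Subgroup.characteristic_iff_map_le.1 inferInstance β) ⟨e, he, rfl⟩

theorem beta_z (B : IsHeisBasis x y z) : ∃ k : ℕ, β z = z ^ k ∧ (k % 7 = 2 ∨ k % 7 = 4) := by
  obtain ⟨k, hk⟩ := B.zgen _ (center_mem z B.hz)
  exact ⟨k, hk, P.exponent (B.pow7 z) B.z1 hk⟩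

/-- `β` has no nontrivial fixed points on `E / Z(E)`. -/
theorem mem_center_of_fix (B : IsHeisBasis x y z) {n c : E} (hc : c ∈ Subgroup.center E)
    (h : β n = n * c) : n ∈ Subgroup.center E := by
  obtain ⟨k, hk, hk'⟩ := P.beta_z B
  obtain ⟨m, rfl⟩ := B.zgen c hc
  obtain ⟨j, hj⟩ : ∃ j : ℕ, (m + k * j) % 7 = j % 7 := by
    rcases hk' with hk' | hk'
    · exact ⟨6 * m, by rw [Nat.add_mod, Nat.mul_mod, hk']; omega⟩
    · exact ⟨2 * m, by rw [Nat.add_mod, Nat.mul_mod, hk']; omega⟩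
  have h1 : n * z ^ j = 1 := by
    apply P.fix
    rw [map_mul, map_pow, h, hk, mul_assoc, ← pow_mul, ← pow_add,
      pow_eq_pow_mod _ (B.pow7 z), hj, ← pow_eq_pow_mod _ (B.pow7 z)]
  rw [eq_inv_of_mul_eq_one_left h1]
  exact inv_mem (pow_mem B.hz _)

/-- The element `x · β x · β² x` is fixed by `β` modulo the centre, hence central; this forces
`β x` to commute with `x`. -/
theorem beta_commute (B : IsHeisBasis x y z) (e : E) : β e * e = e * β e := by
  set u := β e with hu
  set v := β u with hv
  have hvx : β v = e := P.cube e
  have hs : e * u * v ∈ Subgroup.center E := by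
    obtain ⟨c, hc, h⟩ := B.cent e (e * u * v)
    refine P.mem_center_of_fix B hc ?_
    rw [map_mul, map_mul, ← hu, ← hv, hvx]
    apply mul_left_cancel (a := e)
    rw [← mul_assoc e _ c, ← h]
    simp only [mul_assoc]
  obtain ⟨w, hw, h⟩ := B.cent e u
  have h2 : v * u = u * v * β w := by
    have := congrArg β h
    rwa [map_mul, map_mul, map_mul, ← hu, ← hv] at this
  have hs' := Subgroup.mem_center_iff.1 hs
  have hbw := Subgroup.mem_center_iff.1 (center_mem (β := β) w hw)
  have h3 : u * e = e * u * β w := by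
    apply mul_right_cancel (b := u * v)
    calc u * e * (u * v) = u * (e * u * v) := by simp only [mul_assoc]
      _ = e * u * (v * u) := by rw [hs']; simp only [mul_assoc]
      _ = e * u * (u * v * β w) := by rw [h2]
      _ = e * u * β w * (u * v) := by rw [hbw (u * v)]; simp only [mul_assoc]
  have h4 : β w = w := mul_left_cancel (h3.symm.trans h)
  rw [h, P.fix w h4, mul_one]

/-- An element `x` inverted by `α` is mapped by `β` to one of its own powers: `β x` centralizes `x`, so
it is `xᵐ zⁿ`, and since `β x` is inverted by `α` while `z` is fixed by it, `zⁿ = 1`. -/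
theorem beta_eq_pow (B : IsHeisBasis x y z) (hx : α x = x⁻¹) :
    ∃ k : ℕ, β x = x ^ k ∧ (k % 7 = 2 ∨ k % 7 = 4) := by
  obtain ⟨k, n, hk⟩ := B.eq_of_commute (P.beta_commute B x)
  have hzn : z ^ n * z ^ n = 1 := by
    have h := P.comm x
    rw [hx, map_inv, hk, map_mul, map_pow, hx, map_pow, P.center z B.hz, mul_inv_rev, inv_pow,
      B.comm_zpow] at h
    have := mul_right_cancel h
    nth_rw 1 [this]
    exact inv_mul_cancel _
  have hn : n % 7 = 0 := by
    rw [← pow_add, ← pow_zero z] at hzn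
    have := pow_inj_seven (B.pow7 z) B.z1 hzn
    omega
  rw [pow_eq_pow_mod n (B.pow7 z), hn, pow_zero, mul_one] at hk
  refine ⟨k, hk, P.exponent (B.pow7 x) ?_ hk⟩
  rintro rfl
  have := B.yx
  rw [mul_one, one_mul] at this
  exact B.z1 (mul_eq_left.1 this.symm)

/-- Modulo the centre every element has a representative inverted by `α`. -/
theorem exists_inverted (h7 : ∀ e : E, e ^ 7 = 1) (e : E) :
    ∃ c ∈ Subgroup.center E, α (e * c) = (e * c)⁻¹ := by
  have hc := P.inv e
  set c := α e * e with hcd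
  refine ⟨c ^ 3, pow_mem hc 3, ?_⟩
  rw [eq_inv_iff_mul_eq_one]
  have h := Subgroup.mem_center_iff.1 (pow_mem hc 3)
  rw [map_mul, map_pow, P.center c hc, h e, mul_assoc, ← mul_assoc (c ^ 3), ← pow_add,
    ← mul_assoc, Subgroup.mem_center_iff.1 (pow_mem hc (3 + 3)), mul_assoc, ← hcd, ← pow_succ, h7]

theorem exists_basis (hE : IsExtraspecial 7 E) (hcard : Nat.card E = 7 ^ 3)
    (hexp : Monoid.exponent E = 7) :
    ∃ x y z : E, IsHeisBasis x y z ∧ α x = x⁻¹ ∧ α y = y⁻¹ := by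
  have h7 : ∀ e : E, e ^ 7 = 1 := fun e => hexp ▸ Monoid.pow_exponent_eq_one e
  obtain ⟨x, y, hxy⟩ := exists_noncomm hE hcard
  obtain ⟨c, hc, hx⟩ := P.exists_inverted h7 x
  obtain ⟨d, hd, hy⟩ := P.exists_inverted h7 y
  have hc' := Subgroup.mem_center_iff.1 hc
  have hd' := Subgroup.mem_center_iff.1 hd
  have hne : x * c * (y * d) ≠ y * d * (x * c) := by
    intro h
    apply hxy
    apply mul_right_cancel (b := c * d)
    calc x * y * (c * d) = x * (y * c) * d := by simp only [mul_assoc]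
      _ = x * c * (y * d) := by rw [hc']; simp only [mul_assoc]
      _ = y * (d * (x * c)) := by rw [h]; simp only [mul_assoc]
      _ = y * x * (c * d) := by rw [← hd']; simp only [mul_assoc]
  obtain ⟨z, B⟩ := isHeisBasis_of_ne hE hcard hexp hne
  exact ⟨_, _, z, B, hx, hy⟩

/-- In suitable coordinates, `⟨αβ⟩` is generated by the dilation of ratio `3`, a generator of
`𝔽₇ˣ`. The generator is `αβ` or its inverse, according to whether `β` raises to the power `4` or
`2` modulo the centre. -/
theorem exists_normal_form (hE : IsExtraspecial 7 E) (hcard : Nat.card E = 7 ^ 3)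
    (hexp : Monoid.exponent E = 7) :
    ∃ (x y z : E) (δ : MulAut E), IsHeisBasis x y z ∧
      Subgroup.zpowers δ = Subgroup.zpowers (α * β) ∧ δ ^ 6 = 1 ∧
      δ x = x ^ 3 ∧ δ y = y ^ 3 ∧ δ z = z ^ 2 := by
  obtain ⟨x, y, z, B, hx, hy⟩ := P.exists_basis hE hcard hexp
  obtain ⟨z', B'⟩ := isHeisBasis_of_ne hE hcard hexp (x := y) (y := x) (by
    rw [B.yx]; simpa using B.z1)
  obtain ⟨k, hk, hk'⟩ := P.beta_eq_pow B hx
  obtain ⟨l, hl, hl'⟩ := P.beta_eq_pow B' hy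
  have h7 := B.pow7
  have hzkl : β z = z ^ (l * k) := by
    have h := congrArg β B.yx
    rw [map_mul, map_mul, map_mul, hk, hl, B.ypow_xpow] at h
    exact (mul_left_cancel h).symm
  have hkl := P.exponent (h7 z) B.z1 hzkl
  have h6 : (α * β) ^ 6 = 1 := by
    have hc : α * β = β * α := MulEquiv.ext P.comm
    have ha : α ^ 2 = 1 := by
      ext e
      rw [pow_two, MulAut.mul_apply, P.invol, MulAut.one_apply]
    have hb : β ^ 3 = 1 := by
      ext e
      rw [pow_succ, pow_two, MulAut.mul_apply, MulAut.mul_apply, P.cube, MulAut.one_apply]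
    have hc' : Commute α β := hc
    rw [hc'.mul_pow, show α ^ 6 = (α ^ 2) ^ 3 by rw [← pow_mul],
      show β ^ 6 = (β ^ 3) ^ 2 by rw [← pow_mul], ha, hb, one_pow, one_pow, one_mul]
  have hred : ∀ (e : E) {a b : ℕ}, a % 7 = b % 7 → e ^ a = e ^ b := fun e a b h => by
    rw [pow_eq_pow_mod a (h7 e), h, ← pow_eq_pow_mod b (h7 e)]
  have hinv : ∀ e : E, e⁻¹ = e ^ 6 := fun e => by
    rw [inv_eq_iff_mul_eq_one, ← pow_succ', h7]
  have gx : (α * β) x = x ^ (6 * k) := by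
    rw [MulAut.mul_apply, hk, map_pow, hx, hinv, pow_mul]
  have gy : (α * β) y = y ^ (6 * l) := by
    rw [MulAut.mul_apply, hl, map_pow, hy, hinv, pow_mul]
  have gz : (α * β) z = z ^ (l * k) := by
    rw [MulAut.mul_apply, hzkl, map_pow, P.center z B.hz]
  rw [Nat.mul_mod] at hkl
  have hcases : (k % 7 = 4 ∧ l % 7 = 4) ∨ (k % 7 = 2 ∧ l % 7 = 2) := by
    rcases hk' with hk' | hk' <;> rcases hl' with hl' | hl' <;> simp [hk', hl'] at hkl ⊢
  rcases hcases with ⟨hk4, hl4⟩ | ⟨hk2, hl2⟩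
  · refine ⟨x, y, z, α * β, B, rfl, h6, gx.trans (hred _ ?_), gy.trans (hred _ ?_),
      gz.trans (hred _ ?_)⟩
    · omega
    · omega
    · rw [Nat.mul_mod, hk4, hl4]
  · refine ⟨x, y, z, (α * β)⁻¹, B, Subgroup.zpowers_inv, by rw [inv_pow, h6, inv_one],
      ?_, ?_, ?_⟩
    · rw [MulAut.inv_apply, MulEquiv.symm_apply_eq, map_pow, gx, ← pow_mul]
      nth_rw 1 [← pow_one x]
      apply hred; omega
    · rw [MulAut.inv_apply, MulEquiv.symm_apply_eq, map_pow, gy, ← pow_mul]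
      nth_rw 1 [← pow_one y]
      apply hred; omega
    · rw [MulAut.inv_apply, MulEquiv.symm_apply_eq, map_pow, gz, ← pow_mul]
      nth_rw 1 [← pow_one z]
      apply hred; rw [Nat.mul_mod, Nat.mul_mod l, hk2, hl2]

end IsFrobPair

/-! ### Normal structure of the semidirect product -/

theorem isNilpotent_of_quot {G : Type*} [Group G] {A : Subgroup G} [A.Normal] (hA : A = ⊥)
    (h : IsNilpotentQuot A ⊤) : Group.IsNilpotent G := by
  have : Group.IsNilpotent ((⊤ : Subgroup G).map (QuotientGroup.mk' A)) := h
  refine Subgroup.isNilpotent_of_ker_le_center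
    (((QuotientGroup.mk' A).subgroupMap ⊤).comp Subgroup.topEquiv.symm.toMonoidHom) ?_
  intro g hg
  have h1 : QuotientGroup.mk' A g = 1 := congrArg Subtype.val (MonoidHom.mem_ker.1 hg)
  have h2 : g ∈ A := (QuotientGroup.eq_one_iff g).1 h1
  rw [hA, Subgroup.mem_bot] at h2
  rw [h2]
  exact one_mem _

/-- `B / A` is a Sylow `p`-subgroup of `G / A` when it is a `p`-group of index prime to `p`. -/
theorem isSylowQuotStep_of {G : Type*} [Group G] {A B : Subgroup G} [A.Normal] {p : ℕ}
    (hp : p.Prime) (hAB : A ≤ B) (h : ∀ b ∈ B, ∃ k : ℕ, b ^ p ^ k ∈ A) (hi : ¬ p ∣ B.index) :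
    IsSylowQuotStep A B := by
  have : Fact p.Prime := ⟨hp⟩
  have h1 : IsPGroup p (B.map (QuotientGroup.mk' A)) := by
    rintro ⟨_, b, hb, rfl⟩
    obtain ⟨k, hk⟩ := h b hb
    refine ⟨k, Subtype.ext ?_⟩
    change QuotientGroup.mk' A b ^ p ^ k = 1
    rw [← map_pow]
    exact (QuotientGroup.eq_one_iff _).2 hk
  have h2 : ¬ p ∣ (B.map (QuotientGroup.mk' A)).index := by
    rwa [Subgroup.index_map_eq _ (QuotientGroup.mk'_surjective A)
      (by rwa [QuotientGroup.ker_mk'])]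
  exact ⟨p, this, h1.toSylow h2, ⟨MulEquiv.refl _⟩⟩

/-- The data of the normal form: Heisenberg coordinates `x, y, z` on `E`, and a generator `δ` of the
group `C` of automorphisms which is the dilation of ratio `3` in these coordinates. -/
structure IsNormalForm {E : Type*} [Group E] (C : Subgroup (MulAut E)) (x y z : E)
    (δ : MulAut E) : Prop extends IsHeisBasis x y z where
  gen : Subgroup.zpowers δ = C
  pow6 : δ ^ 6 = 1
  dx : δ x = x ^ 3
  dy : δ y = y ^ 3
  dz : δ z = z ^ 2
  zc : ∀ c ∈ Subgroup.center E, c ≠ 1 → ∃ n : ℕ, z = c ^ n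

namespace IsNormalForm
open SemidirectProduct
variable {E : Type} [Group E] {C : Subgroup (MulAut E)} {x y z : E} {δ : MulAut E}
  (S : IsNormalForm C x y z δ)
include S

theorem mem : δ ∈ C := S.gen ▸ Subgroup.mem_zpowers δ

theorem finite_E : Finite E := Nat.finite_of_card_ne_zero (by rw [S.card]; norm_num)

theorem exists_pow (c : C) : ∃ n : ℕ, c = (⟨δ, S.mem⟩ : C) ^ n := by
  have h : (c : MulAut E) ∈ Subgroup.zpowers δ := S.gen.symm ▸ c.2
  have hfin : IsOfFinOrder δ := isOfFinOrder_iff_pow_eq_one.2 ⟨6, by norm_num, S.pow6⟩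
  obtain ⟨n, hn⟩ := hfin.mem_powers_iff_mem_zpowers.2 h
  exact ⟨n, Subtype.ext hn.symm⟩

theorem pow_six (c : C) : c ^ 6 = 1 := by
  obtain ⟨n, rfl⟩ := S.exists_pow c
  apply Subtype.ext
  simp only [← pow_mul, mul_comm n 6]
  simp [pow_mul, S.pow6]

theorem card_dvd : Nat.card C ∣ 6 := by
  rw [← S.gen, Nat.card_zpowers]
  exact orderOf_dvd_of_pow_eq_one S.pow6

theorem finite_C : Finite C :=
  Nat.finite_of_card_ne_zero (fun h => by have := S.card_dvd; rw [h] at this; omega)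

theorem conj_eq {e f : E} (h : δ e = f) :
    (inr ⟨δ, S.mem⟩ : E ⋊[C.subtype] C) * inl e = inl f * inr ⟨δ, S.mem⟩ := by
  rw [← h]
  have := inl_aut (φ := C.subtype) ⟨δ, S.mem⟩ e
  rw [Subgroup.subtype_apply] at this
  change inl (δ e) = _ at this
  rw [this, mul_assoc, ← map_mul, inv_mul_cancel, map_one, mul_one]

theorem heisRel :
    HeisRel (inl x : E ⋊[C.subtype] C) (inl y) (inl z) (inr ⟨δ, S.mem⟩) where
  x7 := by rw [← map_pow, S.pow7, map_one]
  y7 := by rw [← map_pow, S.pow7, map_one]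
  z7 := by rw [← map_pow, S.pow7, map_one]
  g6 := by rw [← map_pow, S.pow_six, map_one]
  yx := by rw [← map_mul, S.yx, map_mul, map_mul]
  zx := by rw [← map_mul, ← S.comm_z, map_mul]
  zy := by rw [← map_mul, ← S.comm_z, map_mul]
  gx := by rw [S.conj_eq S.dx, map_pow]
  gy := by rw [S.conj_eq S.dy, map_pow]
  gz := by rw [S.conj_eq S.dz, map_pow]
  gen := by
    rw [eq_top_iff]
    intro q _
    set T := Submonoid.closure {(inl x : E ⋊[C.subtype] C), inl y, inr ⟨δ, S.mem⟩}
    have hx : (inl x : E ⋊[C.subtype] C) ∈ T := Submonoid.subset_closure (by simp)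
    have hy : (inl y : E ⋊[C.subtype] C) ∈ T := Submonoid.subset_closure (by simp)
    have hg : (inr ⟨δ, S.mem⟩ : E ⋊[C.subtype] C) ∈ T := Submonoid.subset_closure (by simp)
    have hz : (inl z : E ⋊[C.subtype] C) ∈ T := by
      have h : z = y ^ 6 * x ^ 6 * (y * x) := by
        have hi : ∀ e : E, e ^ 6 = e⁻¹ := fun e => by
          rw [eq_inv_iff_mul_eq_one, ← pow_succ, S.pow7]
        rw [S.yx, hi, hi]
        group
      rw [h]
      simp only [map_mul, map_pow]
      exact mul_mem (mul_mem (pow_mem hy _) (pow_mem hx _)) (mul_mem hy hx)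
    rw [← inl_left_mul_inr_right q]
    apply mul_mem
    · obtain ⟨p, hp⟩ := S.coord_bijective.2 q.left
      rw [← hp, IsHeisBasis.coord]
      simp only [map_mul, map_pow]
      exact mul_mem (mul_mem (pow_mem hx _) (pow_mem hy _)) (pow_mem hz _)
    · obtain ⟨n, hn⟩ := S.exists_pow q.right
      rw [hn, map_pow]
      exact pow_mem hg _

omit S in
theorem finite_prod [Finite E] [Finite C] : Finite (E ⋊[C.subtype] C) :=
  Finite.of_equiv _ (SemidirectProduct.equivProd (φ := C.subtype)).symm

omit S in
theorem center_map_normal :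
    ((Subgroup.center E).map (inl : E →* E ⋊[C.subtype] C)).Normal := by
  constructor
  rintro _ ⟨c, hc, rfl⟩ q
  rw [← inl_left_mul_inr_right q]
  have h : q.right.1 c ∈ Subgroup.center E :=
    (Subgroup.characteristic_iff_map_le.1 inferInstance q.right.1) ⟨c, hc, rfl⟩
  refine ⟨q.right.1 c, h, ?_⟩
  have h1 := inl_aut (φ := C.subtype) q.right c
  rw [Subgroup.subtype_apply] at h1
  have h2 := Subgroup.mem_center_iff.1 h q.left
  have h3 : q.left * q.right.1 c * q.left⁻¹ = q.right.1 c := by rw [h2, mul_inv_cancel_right]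
  rw [← h3, map_mul, map_mul, h1, mul_inv_rev]
  simp only [map_inv, mul_assoc]

theorem x_notMem : x ∉ Subgroup.center E := by
  intro h
  have := S.yx
  rw [Subgroup.mem_center_iff.1 h] at this
  exact S.z1 (mul_eq_left.1 this.symm)

theorem charDegrees_eq : charDegrees (E ⋊[C.subtype] C) = {1, 6, 21} := by
  have := S.finite_E
  have := S.finite_C
  have := finite_prod (C := C)
  have := center_map_normal (C := C)
  refine S.heisRel.charDegrees_eq _ (fun h => S.z1 (inl_injective (h.trans (map_one _).symm)))
    (Subgroup.mem_map_of_mem inl S.hz) ?_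
  rintro ⟨c, hc, h⟩
  exact S.x_notMem (inl_injective h ▸ hc)

theorem map_le_of_mem {M : Subgroup (E ⋊[C.subtype] C)} (h : inl z ∈ M) :
    (Subgroup.center E).map inl ≤ M := by
  rintro _ ⟨c, hc, rfl⟩
  obtain ⟨n, rfl⟩ := S.zgen c hc
  rw [map_pow]
  exact pow_mem h n

/-- A normal subgroup meeting `E` nontrivially contains `Z(E)`. -/
theorem le_of_inl_mem {M : Subgroup (E ⋊[C.subtype] C)} (hM : M.Normal) {e : E} (h1 : e ≠ 1)
    (he : inl e ∈ M) : (Subgroup.center E).map inl ≤ M := by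
  have key : ∀ c ∈ Subgroup.center E, c ≠ 1 → inl c ∈ M → (Subgroup.center E).map inl ≤ M := by
    intro c hc hc1 hcM
    apply S.map_le_of_mem
    obtain ⟨n, hn⟩ := S.zc c hc hc1
    rw [hn, map_pow]
    exact pow_mem hcM n
  by_cases hec : e ∈ Subgroup.center E
  · exact key e hec h1 he
  · rw [Subgroup.mem_center_iff] at hec
    push Not at hec
    obtain ⟨f, hf⟩ := hec
    obtain ⟨c, hc, h⟩ := S.cent e f
    refine key c hc ?_ ?_
    · rintro rfl
      exact hf (by rw [h, mul_one])
    · have h2 : c = f⁻¹ * e⁻¹ * f * e := by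
        rw [mul_assoc, h]; group
      rw [h2, map_mul]
      refine mul_mem ?_ he
      have := hM.conj_mem _ (inv_mem he) (inl f⁻¹)
      rwa [← map_inv, ← map_inv, ← map_mul, ← map_mul, inv_inv] at this

/-- A normal subgroup meeting `E` trivially centralizes `E`, so its elements act on `E` as inner
automorphisms; as these have order dividing `7` and `δ⁶ = 1`, the subgroup is trivial. -/
theorem center_le {M : Subgroup (E ⋊[C.subtype] C)} (hM : M.Normal) (hne : M ≠ ⊥) :
    (Subgroup.center E).map inl ≤ M := by
  by_contra hcon
  apply hne
  have htriv : ∀ e : E, inl e ∈ M → e = 1 := fun e he => by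
    by_contra h1
    exact hcon (S.le_of_inl_mem hM h1 he)
  rw [Subgroup.eq_bot_iff_forall]
  intro q hq
  obtain ⟨e, c⟩ := q
  have hq' : (inl e * inr c : E ⋊[C.subtype] C) ∈ M := by rwa [← mk_eq_inl_mul_inr]
  have hact : ∀ f : E, e * c.1 f * e⁻¹ = f := by
    intro f
    have h1 := mul_mem (hM.conj_mem _ hq' (inl f⁻¹)) (inv_mem hq')
    have h2 := inl_aut (φ := C.subtype) c f
    rw [Subgroup.subtype_apply] at h2
    have h3 : (inl f⁻¹ * (inl e * inr c) * (inl f⁻¹)⁻¹ * (inl e * inr c)⁻¹ : E ⋊[C.subtype] C)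
        = inl (f⁻¹ * (e * c.1 f * e⁻¹)) := by
      rw [map_mul, map_mul, map_mul, h2]
      simp only [map_inv, mul_inv_rev, inv_inv, mul_assoc]
    rw [h3] at h1
    have := htriv _ h1
    exact (inv_mul_eq_one.1 this).symm
  have hc : MulAut.conj e * c.1 = 1 := by
    ext f
    exact hact f
  have hc7 : c.1 ^ 7 = 1 := by
    rw [eq_inv_of_mul_eq_one_right hc, inv_pow, ← map_pow, S.pow7, map_one, inv_one]
  have hc6 : c.1 ^ 6 = 1 := congrArg Subtype.val (S.pow_six c)
  have hc1 : c = 1 := by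
    apply Subtype.ext
    rw [pow_succ, hc6, one_mul] at hc7
    exact hc7
  subst hc1
  rw [map_one, mul_one] at hq'
  rw [htriv e hq']
  rfl

theorem isUniqueMinimalNormal :
    IsUniqueMinimalNormal (E ⋊[C.subtype] C)
      ((Subgroup.center E).map (inl : E →* E ⋊[C.subtype] C)) := by
  refine ⟨⟨center_map_normal, ?_, ?_⟩, ?_⟩
  · intro h
    have h1 : (inl z : E ⋊[C.subtype] C) ∈ (⊥ : Subgroup (E ⋊[C.subtype] C)) :=
      h ▸ Subgroup.mem_map_of_mem inl S.hz
    exact S.z1 (inl_injective ((Subgroup.mem_bot.1 h1).trans (map_one _).symm))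
  · intro M hM hle
    by_cases hb : M = ⊥
    · exact Or.inl hb
    · exact Or.inr (le_antisymm hle (S.center_le hM hb))
  · rintro M ⟨hM, hb, hmin⟩
    have hle := S.center_le hM hb
    rcases hmin _ center_map_normal hle with h | h
    · have h1 : (inl z : E ⋊[C.subtype] C) ∈ (⊥ : Subgroup (E ⋊[C.subtype] C)) :=
        h ▸ Subgroup.mem_map_of_mem inl S.hz
      exact (S.z1 (inl_injective ((Subgroup.mem_bot.1 h1).trans (map_one _).symm))).elim
    · exact h.symm

theorem isPGroup_E : IsPGroup 7 E := IsPGroup.of_card (n := 3) S.card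

/-- If `G` were nilpotent, its centre would be nontrivial and so contain `Z(E)`, on which `δ` acts by
`z ↦ z²`. -/
theorem not_nilpotent : ¬ Group.IsNilpotent (E ⋊[C.subtype] C) := by
  intro hnil
  have : Nontrivial (E ⋊[C.subtype] C) :=
    ⟨inl z, 1, fun h => S.z1 (inl_injective (h.trans (map_one _).symm))⟩
  have hne : Subgroup.center (E ⋊[C.subtype] C) ≠ ⊥ :=
    Group.IsNilpotent.center_ne_bot _
  have hz : (inl z : E ⋊[C.subtype] C) ∈ Subgroup.center _ :=
    S.center_le inferInstance hne (Subgroup.mem_map_of_mem inl S.hz)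
  have h := Subgroup.mem_center_iff.1 hz (inr ⟨δ, S.mem⟩)
  rw [S.conj_eq S.dz] at h
  have h2 : z ^ 2 = z := inl_injective (mul_right_cancel h)
  rw [pow_two] at h2
  exact S.z1 (mul_eq_left.1 h2)

omit S in
theorem range_inl_normal : (inl : E →* E ⋊[C.subtype] C).range.Normal := by
  rw [range_inl_eq_ker_rightHom]
  infer_instance

/-- Quotients of `G` by normal subgroups containing `E` are commutative. -/
theorem quot_nilpotent (A : Subgroup (E ⋊[C.subtype] C)) [A.Normal] (hA : inl.range ≤ A)
    (D : Subgroup (E ⋊[C.subtype] C)) :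
    Group.IsNilpotent (D.map (QuotientGroup.mk' A)) := by
  have hcomm : IsMulCommutative C := by rw [← S.gen]; infer_instance
  have h : ∀ a b : (E ⋊[C.subtype] C) ⧸ A, a * b = b * a := by
    intro a b
    have hs : ∀ a : (E ⋊[C.subtype] C) ⧸ A, ∃ c : C, a = QuotientGroup.mk' A (inr c) := by
      intro a
      obtain ⟨q, rfl⟩ := QuotientGroup.mk'_surjective A a
      refine ⟨q.right, ?_⟩
      nth_rw 1 [← inl_left_mul_inr_right q]
      rw [map_mul, (QuotientGroup.eq_one_iff (inl q.left)).2 (hA ⟨_, rfl⟩) |> fun h => (show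
        QuotientGroup.mk' A (inl q.left) = 1 from h), one_mul]
    obtain ⟨c, rfl⟩ := hs a
    obtain ⟨d, rfl⟩ := hs b
    rw [← map_mul, ← map_mul, ← map_mul, ← map_mul, mul_comm']
  let _ : CommGroup (D.map (QuotientGroup.mk' A)) :=
    { (inferInstance : Group (D.map (QuotientGroup.mk' A))) with
      mul_comm := fun a b => Subtype.ext (h a b) }
  infer_instance

/-- The series `1 < E < G` has nilpotent quotients, and `G` itself is not nilpotent. -/
theorem fittingHeight : FittingHeightIs (E ⋊[C.subtype] C) 2 := by
  have := S.finite_E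
  constructor
  · refine ⟨fun i => if i = 0 then ⊥ else if i = 1 then inl.range else ⊤, rfl, rfl, ?_, ?_, ?_⟩
    · intro i
      dsimp only
      split_ifs
      · infer_instance
      · exact range_inl_normal
      · infer_instance
    · intro i hi
      interval_cases i <;> simp
    · intro i hi hn
      interval_cases i
      · have h : IsPGroup 7 (inl : E →* E ⋊[C.subtype] C).range :=
          S.isPGroup_E.of_surjective _ (MonoidHom.rangeRestrict_surjective _)
        have : Fact (Nat.Prime 7) := ⟨by norm_num⟩
        have hfin : Finite (inl : E →* E ⋊[C.subtype] C).range :=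
          Finite.of_surjective _ (MonoidHom.rangeRestrict_surjective _)
        have := h.isNilpotent
        exact Group.nilpotent_of_surjective
          (G := (inl : E →* E ⋊[C.subtype] C).range) _ (MonoidHom.subgroupMap_surjective _ _)
      · exact @quot_nilpotent _ _ _ _ _ _ _ S _ hn le_rfl _
  · rintro m ⟨F, h0, hm, hN, -, hq⟩
    by_contra! hlt
    interval_cases m
    · apply S.not_nilpotent
      have : Subsingleton (E ⋊[C.subtype] C) := by
        rw [← Subgroup.subsingleton_iff]
        exact subsingleton_of_bot_eq_top (h0.symm.trans hm)
      infer_instance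
    · apply S.not_nilpotent
      have hq0 := hq 0 (by norm_num) (hN 0)
      rw [zero_add, hm] at hq0
      exact isNilpotent_of_quot h0 hq0

/-- The elements of `G` whose image in the cyclic group `C` is a square, a subgroup of index at
most `2`. -/
def squares : Subgroup (E ⋊[C.subtype] C) :=
  (Subgroup.zpowers ((⟨δ, S.mem⟩ : C) ^ 2)).comap rightHom

theorem sq_mem (q : E ⋊[C.subtype] C) : q ^ 2 ∈ S.squares := by
  rw [squares, Subgroup.mem_comap, map_pow]
  obtain ⟨n, hn⟩ := S.exists_pow (rightHom q)
  rw [hn, ← pow_mul, mul_comm, pow_mul]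
  exact pow_mem (Subgroup.mem_zpowers _) n

theorem squares_normal : S.squares.Normal := by
  have hcomm : IsMulCommutative C := by rw [← S.gen]; infer_instance
  have : (Subgroup.zpowers ((⟨δ, S.mem⟩ : C) ^ 2)).Normal :=
    ⟨fun n hn g => by rwa [mul_comm' g n, mul_inv_cancel_right]⟩
  exact this.comap _

theorem range_le_squares : inl.range ≤ S.squares := by
  rintro _ ⟨e, rfl⟩
  rw [squares, Subgroup.mem_comap, rightHom_inl]
  exact one_mem _

theorem cube_mem {q : E ⋊[C.subtype] C} (hq : q ∈ S.squares) :
    q ^ 3 ∈ (inl : E →* E ⋊[C.subtype] C).range := by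
  rw [range_inl_eq_ker_rightHom, MonoidHom.mem_ker, map_pow]
  rw [squares, Subgroup.mem_comap] at hq
  obtain ⟨n, hn⟩ := hq
  dsimp only at hn
  rw [← hn, ← zpow_natCast, ← zpow_mul, mul_comm, zpow_mul, zpow_natCast, ← pow_mul,
    S.pow_six, one_zpow]

/-- `G` has the Sylow tower `1 < E < E ⋊ ⟨δ²⟩ ≤ G`, with quotients a `7`-group, a `3`-group and a
`2`-group. -/
theorem hasSylowTower : HasSylowTower (E ⋊[C.subtype] C) := by
  have := S.finite_E
  have := S.finite_C
  have := finite_prod (C := C)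
  refine ⟨3, fun i => if i = 0 then ⊥ else if i = 1 then inl.range else
    if i = 2 then S.squares else ⊤, rfl, rfl, ?_, ?_, ?_⟩
  · intro i
    dsimp only
    split_ifs
    · infer_instance
    · exact range_inl_normal
    · exact S.squares_normal
    · infer_instance
  · intro i hi
    interval_cases i
    · exact bot_le
    · exact S.range_le_squares
    · exact le_top
  · intro i hi hn
    interval_cases i
    · refine @isSylowQuotStep_of _ _ _ _ hn 7 (by norm_num) bot_le ?_ ?_
      · rintro _ ⟨e, rfl⟩
        exact ⟨1, by rw [pow_one, ← map_pow, S.pow7, map_one]; exact one_mem _⟩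
      · change ¬ 7 ∣ (inl : E →* E ⋊[C.subtype] C).range.index
        intro h
        rw [range_inl_eq_ker_rightHom, Subgroup.index_ker,
          MonoidHom.range_eq_top_of_surjective _ rightHom_surjective, Subgroup.card_top] at h
        have := h.trans S.card_dvd
        omega
    · refine @isSylowQuotStep_of _ _ _ _ hn 3 (by norm_num) S.range_le_squares ?_ ?_
      · intro q hq
        exact ⟨1, by rw [pow_one]; exact S.cube_mem hq⟩
      · change ¬ 3 ∣ S.squares.index
        have := S.squares_normal
        intro h
        have : Fact (Nat.Prime 3) := ⟨by norm_num⟩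
        obtain ⟨a, ha⟩ := exists_prime_orderOf_dvd_card' (G := _ ⧸ S.squares) 3 h
        obtain ⟨q, rfl⟩ := QuotientGroup.mk'_surjective _ a
        have h2 : QuotientGroup.mk' S.squares q ^ 2 = 1 := by
          rw [← map_pow]
          exact (QuotientGroup.eq_one_iff _).2 (S.sq_mem q)
        have := orderOf_dvd_of_pow_eq_one h2
        rw [ha] at this
        omega
    · refine @isSylowQuotStep_of _ _ _ _ hn 2 (by norm_num) le_top ?_ ?_
      · intro q _
        exact ⟨1, by rw [pow_one]; exact S.sq_mem q⟩
      · change ¬ 2 ∣ (⊤ : Subgroup (E ⋊[C.subtype] C)).index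
        rw [Subgroup.index_top]
        omega

end IsNormalForm

/-- An extraspecial group `E` of order `7³` and exponent `7` admits
commuting automorphisms `α` of order `2` (centralizing `Z(E)` and inverting `E/Z(E)`)
and `β` of order `3` (with `⟨β⟩` acting Frobeniusly on `E`); for any such `α, β`, the group
`G = E ⋊ ⟨αβ⟩` has character degree set `{1, 6, 21}`, has `Z(E)` as its unique minimal
normal subgroup, has Fitting height `2`, and has a Sylow tower. -/
theorem base_example (E : Type) [Group E] [Finite E]
    (hE : IsExtraspecial 7 E) (hcard : Nat.card E = 7 ^ 3)
    (hexp : Monoid.exponent E = 7) :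
    (∃ α β : MulAut E,
      orderOf α = 2 ∧ (∀ e ∈ Subgroup.center E, α e = e) ∧
      (∀ e : E, α e * e ∈ Subgroup.center E) ∧
      orderOf β = 3 ∧
      (∀ i : ℤ, β ^ i ≠ 1 → ∀ e : E, (β ^ i) e = e → e = 1) ∧
      α * β = β * α) ∧
    (∀ α β : MulAut E,
      orderOf α = 2 → (∀ e ∈ Subgroup.center E, α e = e) →
      (∀ e : E, α e * e ∈ Subgroup.center E) →
      orderOf β = 3 →
      (∀ i : ℤ, β ^ i ≠ 1 → ∀ e : E, (β ^ i) e = e → e = 1) →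
      α * β = β * α →
      charDegrees
          (E ⋊[(Subgroup.zpowers (α * β)).subtype] ↥(Subgroup.zpowers (α * β)))
        = {1, 6, 21} ∧
      IsUniqueMinimalNormal
        (E ⋊[(Subgroup.zpowers (α * β)).subtype] ↥(Subgroup.zpowers (α * β)))
        ((Subgroup.center E).map
          (SemidirectProduct.inl :
            E →* E ⋊[(Subgroup.zpowers (α * β)).subtype] ↥(Subgroup.zpowers (α * β)))) ∧
      FittingHeightIs
        (E ⋊[(Subgroup.zpowers (α * β)).subtype] ↥(Subgroup.zpowers (α * β))) 2 ∧
      HasSylowTower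
        (E ⋊[(Subgroup.zpowers (α * β)).subtype] ↥(Subgroup.zpowers (α * β)))) := by
  refine ⟨?_, ?_⟩
  · obtain ⟨x, y, h⟩ := exists_noncomm hE hcard
    obtain ⟨z, B⟩ := isHeisBasis_of_ne hE hcard hexp h
    exact B.exists_automorphisms
  · intro α β h2 hc hi h3 hf hcomm
    obtain ⟨x, y, z, δ, B, hgen, h6, hx, hy, hz⟩ :=
      (isFrobPair_of h2 hc hi h3 hf hcomm).exists_normal_form hE hcard hexp
    have S : IsNormalForm (Subgroup.zpowers (α * β)) x y z δ :=
      { B with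
        gen := hgen
        pow6 := h6
        dx := hx
        dy := hy
        dz := hz
        zc := fun c hc hc1 => exists_pow_of_mem_center hE.2.2 hc hc1 B.hz }
    exact ⟨S.charDegrees_eq, S.isUniqueMinimalNormal, S.fittingHeight, S.hasSylowTower⟩
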